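/- arXiv:2207.05554 — 4 statements merged into one kernel-verified Lean document; each statement's English description precedes it below -/
import Mathlib

section
/- Let $G_n = a_1(n)\alpha_1^n + \cdots + a_d(n)\alpha_d^n$ and $H_m = b_1(m)\beta_1^m + \cdots + b_t(m)\beta_t^m$ be two non-degenerate linear recurrence sequences of polynomials in $\mathbb{C}[x]$ whose characteristic roots $\alpha_i, \beta_j$ are polynomials in $\mathbb{C}[x]$. Assume that no $\alpha_i$ and no $\beta_j$ is contained in $\mathbb{C}$, that for every $j \in \{1,\ldots,t\}$ the pair $(\alpha_1, \beta_j)$ is multiplicatively independent, and that $\deg \alpha_1 \ge \deg \alpha_i$ for all $i \in \{1,\ldots,d\}$. Fix nonzero $a, b \in \mathbb{C}[x]$. Then there exist effectively computable constants $c_1$ and $C'$, independent of $n$ and $m$, such that for all pairs $(n,m)$ of non-negative integers with $\max\{n,m\} > c_1$ one has $\deg(a G_n - b H_m) \ge \deg G_n - C'$. -/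
/-!
STATEMENT 3: The corollary of Theorem 2 for linear recurrence sequences of
polynomials in `ℂ[x]` whose characteristic roots are polynomials as well:
`deg (a Gₙ - b Hₘ) ≥ deg Gₙ - C'` for `max {n, m} > c₁`
(with the convention `deg 0 = -∞`, formalized via `Polynomial.degree` in
`WithBot ℕ` and the equivalent inequality `deg Gₙ ≤ deg (a Gₙ - b Hₘ) + C`).
-/

/-- A rational function is constant, i.e. lies in `ℂ`. -/
def RatIsConst (f : RatFunc ℂ) : Prop :=
  f ∈ Set.range (RatFunc.C : ℂ →+* RatFunc ℂ)

/-- Two polynomials `p, q ∈ ℂ[x]`, viewed in `ℂ(x)`, are multiplicatively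
independent: `p^r q^s ∈ ℂ` forces `r = s = 0`. -/
def PolyMultIndep (p q : Polynomial ℂ) : Prop :=
  ∀ r s : ℤ,
    RatIsConst ((algebraMap (Polynomial ℂ) (RatFunc ℂ) p) ^ r *
      (algebraMap (Polynomial ℂ) (RatFunc ℂ) q) ^ s) → r = 0 ∧ s = 0

open Polynomial in
/-- Vanishing Wronskian of two polynomials implies proportionality. -/
lemma aux_prop (g e : ℂ[X]) (he : e ≠ 0) (h : derivative g * e = g * derivative e) :
    ∃ c : ℂ, g = C c * e := by
  have hd : ∀ p : ℂ[X], derivative p = 0 → ∃ c : ℂ, p = C c := fun p hp =>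
    ⟨p.coeff 0, eq_C_of_derivative_eq_zero hp⟩
  -- any solution has degree equal to that of e or is zero
  have key : ∀ g : ℂ[X], derivative g * e = g * derivative e → g ≠ 0 →
      g.natDegree = e.natDegree := by
    intro g h hg
    by_cases hg0 : g.natDegree = 0
    · have : derivative g = 0 := derivative_of_natDegree_zero hg0
      rw [this, zero_mul, eq_comm, mul_eq_zero] at h
      have h2 := h.resolve_left hg
      rw [derivative_eq_zero.mp h2, hg0]
    · by_cases he0 : e.natDegree = 0
      · have : derivative e = 0 := derivative_of_natDegree_zero he0
        rw [this, mul_zero, mul_eq_zero] at h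
        have h2 := h.resolve_right he
        exact absurd (derivative_eq_zero.mp h2) hg0
      · have h1 := congrArg (fun p => p.coeff ((g.natDegree - 1) + e.natDegree)) h
        have hdg : (derivative g).natDegree ≤ g.natDegree - 1 := natDegree_derivative_le g
        have hde : (derivative e).natDegree ≤ e.natDegree - 1 := natDegree_derivative_le e
        rw [coeff_mul_add_eq_of_natDegree_le hdg le_rfl,
          show g.natDegree - 1 + e.natDegree = g.natDegree + (e.natDegree - 1) by omega,
          coeff_mul_add_eq_of_natDegree_le le_rfl hde, coeff_derivative, coeff_derivative,
          show g.natDegree - 1 + 1 = g.natDegree by omega,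
          show e.natDegree - 1 + 1 = e.natDegree by omega] at h1
        have hlg : g.coeff g.natDegree ≠ 0 := by
          simpa using hg
        have hle : e.coeff e.natDegree ≠ 0 := by
          simpa using he
        have h3 : (((g.natDegree - 1 : ℕ) : ℂ) + 1) = ((e.natDegree - 1 : ℕ) : ℂ) + 1 := by
          have : g.coeff g.natDegree * e.coeff e.natDegree ≠ 0 := mul_ne_zero hlg hle
          apply mul_left_cancel₀ this
          linear_combination h1
        have h4 : (g.natDegree - 1) + 1 = (e.natDegree - 1) + 1 := by exact_mod_cast h3
        omega
  by_cases hg : g = 0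
  · exact ⟨0, by simp [hg]⟩
  have hdeg := key g h hg
  refine ⟨g.leadingCoeff / e.leadingCoeff, ?_⟩
  set c := g.leadingCoeff / e.leadingCoeff with hc
  have hle : e.leadingCoeff ≠ 0 := by simpa using he
  by_contra hne
  have hne' : g - C c * e ≠ 0 := sub_ne_zero.mpr hne
  have h5 := key (g - C c * e) (by
    simp only [derivative_sub, derivative_mul, derivative_C]; linear_combination h) hne'
  have h6 : (g - C c * e).coeff e.natDegree = 0 := by
    rw [coeff_sub, coeff_C_mul, ← hdeg, coeff_natDegree, hdeg, coeff_natDegree, hc]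
    field_simp
    simp
  rw [← h5, coeff_natDegree, leadingCoeff_eq_zero] at h6
  exact hne' h6

open Polynomial in
/-- The elimination lemma. -/
lemma aux_elim {ι : Type*} [DecidableEq ι] (R : ℂ[X]) (hR : R ≠ 0) (E : ℕ) (o : ι) (S : Finset ι) :
    o ∉ S → ∀ D : ℕ, ∃ K : ℕ, ∀ (u q ρ : ι → ℂ[X]) (f : ℂ[X]),
      (∀ k, u k ≠ 0) → (∀ k, R * derivative (u k) = u k * ρ k) →
      (∀ k, (ρ k).natDegree ≤ E) → (∀ k, (q k).natDegree ≤ D) → q o ≠ 0 →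
      f = q o * u o + ∑ k ∈ S, q k * u k →
      (f ≠ 0 ∧ (u o).natDegree ≤ f.natDegree + K) ∨
      ∃ k ∈ S, ∃ w₁ w₂ : ℂ[X], w₁ ≠ 0 ∧ w₂ ≠ 0 ∧ w₁.natDegree ≤ K ∧ w₂.natDegree ≤ K ∧
        u o * w₁ = u k * w₂ := by
  induction S using Finset.induction_on with
  | empty =>
    intro _ D
    refine ⟨0, fun u q ρ f hu _ _ _ hq hf => Or.inl ?_⟩
    simp only [Finset.sum_empty, add_zero] at hf
    subst hf
    refine ⟨mul_ne_zero hq (hu o), ?_⟩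
    rw [natDegree_mul hq (hu o)]; omega
  | insert l S hl ih =>
    intro ho D
    simp only [Finset.mem_insert, not_or] at ho
    obtain ⟨hol, hoS⟩ := ho
    obtain ⟨K1, hK1⟩ := ih hoS D
    obtain ⟨K2, hK2⟩ := ih hoS (R.natDegree + E + 2 * D)
    refine ⟨K1 + K2 + R.natDegree + E + D, fun u q ρ f hu hρ hρE hqD hq hf => ?_⟩
    rw [Finset.sum_insert hl] at hf
    by_cases hql : q l = 0
    · rw [hql, zero_mul, zero_add] at hf
      rcases hK1 u q ρ f hu hρ hρE hqD hq hf with ⟨h1, h2⟩ | ⟨k, hk, w1, w2, h1, h2, h3, h4, h5⟩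
      · exact Or.inl ⟨h1, by omega⟩
      · exact Or.inr ⟨k, Finset.mem_insert_of_mem hk, w1, w2, h1, h2, by omega, by omega, h5⟩
    set q' : ι → ℂ[X] := fun k => R * (derivative (q k) * q l - q k * derivative (q l))
      + q k * q l * (ρ k - ρ l) with hq'
    set f' : ℂ[X] := R * derivative f * q l - f * (R * derivative (q l) + q l * ρ l) with hf'
    have hT : ∀ k, R * derivative (q k * u k) * q l
        - (q k * u k) * (R * derivative (q l) + q l * ρ l) = q' k * u k := by
      intro k
      simp only [hq', derivative_mul]
      linear_combination (q k * q l) * hρ k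
    have hdq : ∀ k, (derivative (q k)).natDegree ≤ D := fun k =>
      (natDegree_derivative_le _).trans (by have := hqD k; omega)
    by_cases hqo : q' o = 0
    · right
      have hW : derivative (q o * u o) * (q l * u l) = (q o * u o) * derivative (q l * u l) := by
        have h1 := hT o
        rw [hqo, zero_mul] at h1
        apply mul_left_cancel₀ hR
        have h2 := hρ l
        rw [derivative_mul (f := q l)]
        linear_combination u l * h1 - (q o * u o * q l) * h2
      obtain ⟨c, hc⟩ := aux_prop _ _ (mul_ne_zero hql (hu l)) hW
      have hc0 : c ≠ 0 := by
        rintro rfl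
        rw [C_0, zero_mul] at hc
        exact mul_ne_zero hq (hu o) hc
      refine ⟨l, Finset.mem_insert_self _ _, q o, C c * q l, hq, mul_ne_zero (by simpa using hc0) hql,
        ?_, ?_, by linear_combination hc⟩
      · have := hqD o; omega
      · rw [natDegree_C_mul hc0]; have := hqD l; omega
    have hff : f' = q' o * u o + ∑ k ∈ S, q' k * u k := by
      have hl0 : q' l = 0 := by simp only [hq']; ring
      rw [← hT o, Finset.sum_congr rfl (fun k _ => (hT k).symm), hf', hf]
      have h3 := hT l
      rw [hl0, zero_mul] at h3
      simp only [derivative_add, derivative_sum, Finset.sum_sub_distrib, Finset.mul_sum,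
        Finset.sum_mul, mul_add, add_mul] at h3 ⊢
      simp only [Finset.sum_add_distrib]
      linear_combination h3
    have hqD' : ∀ k, (q' k).natDegree ≤ R.natDegree + E + 2 * D := by
      intro k
      simp only [hq']
      have a1 := hdq k
      have a2 := hdq l
      have a3 := hqD k
      have a4 := hqD l
      have a5 := hρE k
      have a6 := hρE l
      refine natDegree_add_le_of_degree_le ?_ ?_
      · refine natDegree_mul_le.trans ?_
        have : (derivative (q k) * q l - q k * derivative (q l)).natDegree ≤ 2 * D := by
          refine (natDegree_sub_le _ _).trans (max_le ?_ ?_)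
          · exact natDegree_mul_le.trans (by omega)
          · exact natDegree_mul_le.trans (by omega)
        omega
      · refine natDegree_mul_le.trans ?_
        have b1 : (q k * q l).natDegree ≤ 2 * D := natDegree_mul_le.trans (by omega)
        have b2 : (ρ k - ρ l).natDegree ≤ E := (natDegree_sub_le _ _).trans (max_le a5 a6)
        omega
    have hfd : f'.natDegree ≤ f.natDegree + (R.natDegree + E + D) := by
      have a2 := hdq l
      have a4 := hqD l
      have a6 := hρE l
      have a7 : (derivative f).natDegree ≤ f.natDegree :=
        (natDegree_derivative_le _).trans (by omega)
      refine (natDegree_sub_le _ _).trans (max_le ?_ ?_)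
      · refine natDegree_mul_le.trans ?_
        have : (R * derivative f).natDegree ≤ R.natDegree + f.natDegree :=
          natDegree_mul_le.trans (by omega)
        omega
      · refine natDegree_mul_le.trans ?_
        have : (R * derivative (q l) + q l * ρ l).natDegree ≤ R.natDegree + E + D := by
          refine natDegree_add_le_of_degree_le ?_ ?_
          · exact natDegree_mul_le.trans (by omega)
          · exact natDegree_mul_le.trans (by omega)
        omega
    rcases hK2 u q' ρ f' hu hρ hρE hqD' hqo hff with ⟨h1, h2⟩ | ⟨k, hk, w1, w2, h1, h2, h3, h4, h5⟩
    · refine Or.inl ⟨?_, by omega⟩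
      rintro rfl
      exact h1 (by simp [hf'])
    · exact Or.inr ⟨k, Finset.mem_insert_of_mem hk, w1, w2, h1, h2, by omega, by omega, h5⟩

open Polynomial in
/-- Elimination lemma for powers of fixed polynomials. -/
lemma aux_pow {ι : Type*} [Fintype ι] [DecidableEq ι] (γ : ι → ℂ[X]) (hγ : ∀ k, γ k ≠ 0)
    (o : ι) (D : ℕ) : ∃ K : ℕ, ∀ (N : ι → ℕ) (q : ι → ℂ[X]),
      (∀ k, (q k).natDegree ≤ D) → q o ≠ 0 →
      ((∑ k, q k * γ k ^ N k) ≠ 0 ∧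
        (γ o ^ N o).natDegree ≤ (∑ k, q k * γ k ^ N k).natDegree + K) ∨
      ∃ k, k ≠ o ∧ ∃ w₁ w₂ : ℂ[X], w₁ ≠ 0 ∧ w₂ ≠ 0 ∧ w₁.natDegree ≤ K ∧ w₂.natDegree ≤ K ∧
        γ o ^ N o * w₁ = γ k ^ N k * w₂ := by
  set R : ℂ[X] := ∏ k, γ k with hRdef
  have hR : R ≠ 0 := Finset.prod_ne_zero_iff.mpr fun k _ => hγ k
  let σ : ι → ℂ[X] := fun k => (∏ j ∈ Finset.univ.erase k, γ j) * derivative (γ k)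
  set E := ∑ k, (σ k).natDegree with hE
  obtain ⟨K, hK⟩ := aux_elim R hR E o (Finset.univ.erase o) (by simp) D
  refine ⟨K, fun N q hqD hq => ?_⟩
  have := hK (fun k => γ k ^ N k) q (fun k => C (N k : ℂ) * σ k) (∑ k, q k * γ k ^ N k)
    (fun k => pow_ne_zero _ (hγ k)) ?_ ?_ hqD hq ?_
  · rcases this with h | ⟨k, hk, h⟩
    · exact Or.inl h
    · exact Or.inr ⟨k, by simpa using hk, h⟩
  · intro k
    have h1 : R = γ k * ∏ j ∈ Finset.univ.erase k, γ j :=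
      (Finset.mul_prod_erase _ _ (Finset.mem_univ k)).symm
    rw [h1]
    simp only [σ]
    rw [derivative_pow]
    rcases hN : N k with _ | n
    · simp
    · simp only [Nat.add_sub_cancel]; ring
  · intro k
    refine (natDegree_C_mul_le _ _).trans ?_
    exact Finset.single_le_sum (f := fun k => (σ k).natDegree) (fun _ _ => Nat.zero_le _)
      (Finset.mem_univ k)
  · exact (Finset.add_sum_erase _ (fun k => q k * γ k ^ N k) (Finset.mem_univ o)).symm

open Polynomial in
lemma aux_root_eq (p q : ℂ[X]) (hp : p ≠ 0) (hq : q ≠ 0)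
    (h : ∀ z, p.rootMultiplicity z = q.rootMultiplicity z) : ∃ c : ℂ, p = C c * q := by
  have hr : p.roots = q.roots := by
    ext z
    rw [count_roots, count_roots, h z]
  have h1 := (IsAlgClosed.splits p).eq_prod_roots
  have h2 := (IsAlgClosed.splits q).eq_prod_roots
  have hlq : q.leadingCoeff ≠ 0 := by simpa using hq
  refine ⟨p.leadingCoeff / q.leadingCoeff, ?_⟩
  rw [hr] at h1
  calc p = C p.leadingCoeff * (q.roots.map fun a => X - C a).prod := h1
    _ = C (p.leadingCoeff / q.leadingCoeff) * (C q.leadingCoeff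
          * (q.roots.map fun a => X - C a).prod) := by
        rw [← mul_assoc, ← C_mul, div_mul_cancel₀ _ hlq]
    _ = _ := by rw [← h2]

open Polynomial in
lemma aux_mult_le (w : ℂ[X]) (hw : w ≠ 0) (z : ℂ) : w.rootMultiplicity z ≤ w.natDegree := by
  rw [← count_roots]
  exact (Multiset.count_le_card _ _).trans (card_roots' w)

open Polynomial in
lemma aux_mult_pow (p : ℂ[X]) (n : ℕ) (z : ℂ) :
    (p ^ n).rootMultiplicity z = n * p.rootMultiplicity z := by
  rw [← count_roots, roots_pow, Multiset.count_nsmul, count_roots]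

open Polynomial in
lemma aux_mult_rel (p q w₁ w₂ : ℂ[X]) (hp : p ≠ 0) (hq : q ≠ 0) (h1 : w₁ ≠ 0) (h2 : w₂ ≠ 0)
    (n m : ℕ) (h : p ^ n * w₁ = q ^ m * w₂) (z : ℂ) :
    n * p.rootMultiplicity z + w₁.rootMultiplicity z
      = m * q.rootMultiplicity z + w₂.rootMultiplicity z := by
  have := congrArg (rootMultiplicity z) h
  rwa [rootMultiplicity_mul (mul_ne_zero (pow_ne_zero _ hp) h1),
    rootMultiplicity_mul (mul_ne_zero (pow_ne_zero _ hq) h2), aux_mult_pow, aux_mult_pow] at this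

open Polynomial in
lemma aux_A (p q : ℂ[X]) (hp : p ≠ 0) (hq : q ≠ 0)
    (h : ¬ RatIsConst (algebraMap (Polynomial ℂ) (RatFunc ℂ) p /
      algebraMap (Polynomial ℂ) (RatFunc ℂ) q)) (K : ℕ) :
    ∃ M : ℕ, ∀ n : ℕ, ∀ w₁ w₂ : ℂ[X], w₁ ≠ 0 → w₂ ≠ 0 → w₁.natDegree ≤ K → w₂.natDegree ≤ K →
      p ^ n * w₁ = q ^ n * w₂ → n ≤ M := by
  have hz : ∃ z, p.rootMultiplicity z ≠ q.rootMultiplicity z := by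
    by_contra! hcon
    obtain ⟨c, hc⟩ := aux_root_eq p q hp hq hcon
    apply h
    refine ⟨c, ?_⟩
    have hq' : algebraMap (Polynomial ℂ) (RatFunc ℂ) q ≠ 0 := RatFunc.algebraMap_ne_zero hq
    rw [hc, map_mul, RatFunc.algebraMap_C, mul_div_cancel_right₀ _ hq']
  obtain ⟨z, hz⟩ := hz
  refine ⟨K, fun n w₁ w₂ h1 h2 hK1 hK2 hrel => ?_⟩
  have h3 := aux_mult_rel p q w₁ w₂ hp hq h1 h2 n n hrel z
  have h4 := (aux_mult_le w₁ h1 z).trans hK1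
  have h5 := (aux_mult_le w₂ h2 z).trans hK2
  rcases lt_or_gt_of_ne hz with hlt | hlt
  · nlinarith
  · nlinarith

open Polynomial in
lemma aux_B (p q : ℂ[X]) (hp : p ≠ 0) (hq : q ≠ 0) (hqc : ∀ c, q ≠ C c)
    (h : PolyMultIndep p q) (K : ℕ) :
    ∃ M : ℕ, ∀ n m : ℕ, ∀ w₁ w₂ : ℂ[X], w₁ ≠ 0 → w₂ ≠ 0 → w₁.natDegree ≤ K →
      w₂.natDegree ≤ K → p ^ n * w₁ = q ^ m * w₂ → n ≤ M := by
  have hdq : q.degree ≠ 0 := fun h0 => hqc _ (eq_C_of_degree_eq_zero h0)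
  obtain ⟨w, hw⟩ := IsAlgClosed.exists_root q hdq
  have hr : 0 < q.rootMultiplicity w := (rootMultiplicity_pos hq).mpr hw
  have hz : ∃ z, q.rootMultiplicity w * p.rootMultiplicity z
      ≠ p.rootMultiplicity w * q.rootMultiplicity z := by
    by_contra! hcon
    obtain ⟨c, hc⟩ := aux_root_eq (p ^ q.rootMultiplicity w) (q ^ p.rootMultiplicity w)
      (pow_ne_zero _ hp) (pow_ne_zero _ hq) (fun z => by
        rw [aux_mult_pow, aux_mult_pow, hcon z])
    have := h (q.rootMultiplicity w) (-(p.rootMultiplicity w : ℤ)) ⟨c, by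
      have hq' : algebraMap (Polynomial ℂ) (RatFunc ℂ) q ≠ 0 := RatFunc.algebraMap_ne_zero hq
      rw [zpow_natCast, ← map_pow, hc, map_mul, RatFunc.algebraMap_C, map_pow, zpow_neg,
        zpow_natCast, mul_assoc, mul_inv_cancel₀ (pow_ne_zero _ hq'), mul_one]⟩
    omega
  obtain ⟨z, hz⟩ := hz
  refine ⟨K * (q.rootMultiplicity w + q.rootMultiplicity z),
    fun n m w₁ w₂ h1 h2 hK1 hK2 hrel => ?_⟩
  have h3 := aux_mult_rel p q w₁ w₂ hp hq h1 h2 n m hrel z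
  have h4 := (aux_mult_le w₁ h1 z).trans hK1
  have h5 := (aux_mult_le w₂ h2 z).trans hK2
  have h3' := aux_mult_rel p q w₁ w₂ hp hq h1 h2 n m hrel w
  have h4' := (aux_mult_le w₁ h1 w).trans hK1
  have h5' := (aux_mult_le w₂ h2 w).trans hK2
  generalize q.rootMultiplicity w = bw at *
  generalize q.rootMultiplicity z = bz at *
  generalize p.rootMultiplicity w = aw at *
  generalize p.rootMultiplicity z = az at *
  generalize w₁.rootMultiplicity w = x' at *
  generalize w₂.rootMultiplicity w = y' at *
  generalize w₁.rootMultiplicity z = x at *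
  generalize w₂.rootMultiplicity z = y at *
  -- n * (bw*az) + x*bw + y'*bz = n*(aw*bz) + y*bw + x'*bz
  have key : n * (bw * az) + x * bw + y' * bz = n * (aw * bz) + y * bw + x' * bz := by
    zify at *
    linear_combination bw * h3 - bz * h3'
  have e1 : x * bw ≤ K * bw := Nat.mul_le_mul_right _ h4
  have e2 : y * bw ≤ K * bw := Nat.mul_le_mul_right _ h5
  have e3 : x' * bz ≤ K * bz := Nat.mul_le_mul_right _ h4'
  have e4 : y' * bz ≤ K * bz := Nat.mul_le_mul_right _ h5'
  rw [mul_add]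
  rcases lt_or_gt_of_ne hz with hlt | hlt
  · have : n * (bw * az) + n ≤ n * (aw * bz) := by
      calc _ = n * (bw * az + 1) := by ring
        _ ≤ _ := Nat.mul_le_mul_left _ hlt
    omega
  · have : n * (aw * bz) + n ≤ n * (bw * az) := by
      calc _ = n * (aw * bz + 1) := by ring
        _ ≤ _ := Nat.mul_le_mul_left _ hlt
    omega

open Polynomial in
lemma aux_coef (a : ℂ[X]) (P : Polynomial ℂ[X]) :
    ∃ D : ℕ, ∀ n : ℕ, (a * P.eval (n : ℂ[X])).natDegree ≤ D := by
  refine ⟨a.natDegree + ∑ i ∈ P.support, (P.coeff i).natDegree, fun n => ?_⟩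
  refine natDegree_mul_le.trans (Nat.add_le_add_left ?_ _)
  rw [eval_eq_sum, Polynomial.sum]
  refine natDegree_sum_le_of_forall_le _ _ fun i hi => ?_
  refine natDegree_mul_le.trans ?_
  rw [← Nat.cast_pow, natDegree_natCast, add_zero]
  exact Finset.single_le_sum (f := fun k => (P.coeff k).natDegree) (fun _ _ => Nat.zero_le _) hi

open Polynomial in
lemma aux_nonzero (P : Polynomial ℂ[X]) (hP : P ≠ 0) :
    ∃ M : ℕ, ∀ n : ℕ, M < n → P.eval (n : ℂ[X]) ≠ 0 := by
  have hf : {n : ℕ | P.eval (n : ℂ[X]) = 0}.Finite := by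
    have h1 : {x | IsRoot P x}.Finite := finite_setOfPred_isRoot hP
    exact h1.preimage (f := fun n : ℕ => (n : ℂ[X])) Nat.cast_injective.injOn
  obtain ⟨M, hM⟩ := hf.bddAbove
  exact ⟨M, fun n hn h0 => absurd (hM h0) (by omega)⟩

theorem stmt_3
    (d t : ℕ)
    -- the characteristic roots (polynomials) and coefficients
    -- (the `A i`, `B j` are polynomials in `n` with coefficients in `ℂ[x]`)
    (α : Fin (d + 1) → Polynomial ℂ) (A : Fin (d + 1) → Polynomial (Polynomial ℂ))
    (β : Fin (t + 1) → Polynomial ℂ) (B : Fin (t + 1) → Polynomial (Polynomial ℂ))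
    (hα0 : ∀ i, α i ≠ 0) (hA0 : ∀ i, A i ≠ 0)
    (hβ0 : ∀ j, β j ≠ 0) (hB0 : ∀ j, B j ≠ 0)
    (hαinj : Function.Injective α) (hβinj : Function.Injective β)
    -- non-degeneracy: no ratio of distinct roots is constant
    (hGnd : ∀ i j, i ≠ j → ¬ RatIsConst
      (algebraMap (Polynomial ℂ) (RatFunc ℂ) (α i) / algebraMap (Polynomial ℂ) (RatFunc ℂ) (α j)))
    (hHnd : ∀ i j, i ≠ j → ¬ RatIsConst
      (algebraMap (Polynomial ℂ) (RatFunc ℂ) (β i) / algebraMap (Polynomial ℂ) (RatFunc ℂ) (β j)))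
    -- no `αᵢ` and no `βⱼ` lies in `ℂ`
    (hα1 : ∀ i, ∀ c : ℂ, α i ≠ Polynomial.C c)
    (hβ1 : ∀ j, ∀ c : ℂ, β j ≠ Polynomial.C c)
    -- `(α₁, βⱼ)` multiplicatively independent for all `j`
    (hindep : ∀ j, PolyMultIndep (α 0) (β j))
    -- `deg α₁ ≥ deg αᵢ` for all `i`
    (hdeg : ∀ i, (α i).degree ≤ (α 0).degree)
    (a b : Polynomial ℂ) (ha : a ≠ 0) (hb : b ≠ 0)
    (G H : ℕ → Polynomial ℂ)
    (hG : ∀ n : ℕ, G n = ∑ i, (A i).eval (n : Polynomial ℂ) * α i ^ n)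
    (hH : ∀ m : ℕ, H m = ∑ j, (B j).eval (m : Polynomial ℂ) * β j ^ m) :
    ∃ c₁ : ℕ, ∃ C' : ℕ, ∀ n m : ℕ, c₁ < max n m →
      (G n).degree ≤ (a * G n - b * H m).degree + (C' : WithBot ℕ) := by
  classical
  -- coefficient bounds
  choose DA hDA using fun i => aux_coef a (A i)
  choose DB hDB using fun j => aux_coef (-b) (B j)
  obtain ⟨MA, hMA⟩ := aux_nonzero (A 0) (hA0 0)
  obtain ⟨MB, hMB⟩ := aux_nonzero (B 0) (hB0 0)
  -- the combined family
  let γ : Fin (d + 1) ⊕ Fin (t + 1) → Polynomial ℂ := Sum.elim α β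
  have hγ : ∀ k, γ k ≠ 0 := by
    rintro (i | j)
    · exact hα0 i
    · exact hβ0 j
  obtain ⟨K, hK⟩ := aux_pow γ hγ (Sum.inl 0) (∑ i, DA i + ∑ j, DB j)
  obtain ⟨L, hL⟩ := aux_pow β hβ0 0 (∑ j, DB j)
  have hsA : ∀ i, DA i ≤ ∑ i, DA i := fun i =>
    Finset.single_le_sum (fun _ _ => Nat.zero_le _) (Finset.mem_univ i)
  have hsB : ∀ j, DB j ≤ ∑ j, DB j := fun j =>
    Finset.single_le_sum (fun _ _ => Nat.zero_le _) (Finset.mem_univ j)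
  have hMα : ∀ i : Fin (d + 1), ∃ M : ℕ, i ≠ 0 → ∀ n : ℕ, ∀ w₁ w₂ : Polynomial ℂ,
      w₁ ≠ 0 → w₂ ≠ 0 → w₁.natDegree ≤ K → w₂.natDegree ≤ K →
      α 0 ^ n * w₁ = α i ^ n * w₂ → n ≤ M := by
    intro i
    by_cases hi : i = 0
    · exact ⟨0, fun h => absurd hi h⟩
    · obtain ⟨M, hM⟩ := aux_A (α 0) (α i) (hα0 0) (hα0 i) (hGnd 0 i (Ne.symm hi)) K
      exact ⟨M, fun _ => hM⟩
  choose Mα hMα using hMα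
  have hMβ : ∀ i : Fin (t + 1), ∃ M : ℕ, i ≠ 0 → ∀ n : ℕ, ∀ w₁ w₂ : Polynomial ℂ,
      w₁ ≠ 0 → w₂ ≠ 0 → w₁.natDegree ≤ L → w₂.natDegree ≤ L →
      β 0 ^ n * w₁ = β i ^ n * w₂ → n ≤ M := by
    intro i
    by_cases hi : i = 0
    · exact ⟨0, fun h => absurd hi h⟩
    · obtain ⟨M, hM⟩ := aux_A (β 0) (β i) (hβ0 0) (hβ0 i) (hHnd 0 i (Ne.symm hi)) L
      exact ⟨M, fun _ => hM⟩
  choose Mβ hMβ using hMβ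
  choose Mx hMx using fun j => aux_B (α 0) (β j) (hα0 0) (hβ0 j) (hβ1 j) (hindep j) K
  have hsα : ∀ i, Mα i ≤ ∑ i, Mα i := fun i =>
    Finset.single_le_sum (fun _ _ => Nat.zero_le _) (Finset.mem_univ i)
  have hsβ : ∀ i, Mβ i ≤ ∑ i, Mβ i := fun i =>
    Finset.single_le_sum (fun _ _ => Nat.zero_le _) (Finset.mem_univ i)
  have hsx : ∀ i, Mx i ≤ ∑ i, Mx i := fun i =>
    Finset.single_le_sum (fun _ _ => Nat.zero_le _) (Finset.mem_univ i)
  -- n beyond N₀: the main estimate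
  set N₀ := MA + ∑ i, Mα i + ∑ j, Mx j with hN₀
  have hlarge : ∀ n m : ℕ, N₀ < n → (a * G n - b * H m ≠ 0 ∧
      (α 0 ^ n).natDegree ≤ (a * G n - b * H m).natDegree + K) := by
    intro n m hn
    have hsum : a * G n - b * H m = ∑ k, (Sum.elim (fun i => a * (A i).eval (n : Polynomial ℂ))
        (fun j => -b * (B j).eval (m : Polynomial ℂ)) k) *
        γ k ^ (Sum.elim (fun _ => n) (fun _ => m) k : ℕ) := by
      rw [Fintype.sum_sum_type, hG, hH, Finset.mul_sum, Finset.mul_sum, sub_eq_add_neg,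
        ← Finset.sum_neg_distrib]
      simp only [Sum.elim_inl, Sum.elim_inr, γ]
      congr 1
      · exact Finset.sum_congr rfl fun i _ => by ring
      · exact Finset.sum_congr rfl fun i _ => by ring
    have hq1 : ∀ k, (Sum.elim (fun i => a * (A i).eval (n : Polynomial ℂ))
        (fun j => -b * (B j).eval (m : Polynomial ℂ)) k).natDegree ≤ ∑ i, DA i + ∑ j, DB j := by
      rintro (i | j)
      · exact (hDA i n).trans ((hsA i).trans (Nat.le_add_right _ _))
      · exact (hDB j m).trans ((hsB j).trans (Nat.le_add_left _ _))
    rcases hK (Sum.elim (fun _ => n) (fun _ => m)) _ hq1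
      (mul_ne_zero ha (hMA n (by omega))) with h | ⟨k, hk, w₁, w₂, h1, h2, h3, h4, h5⟩
    · rw [hsum]; exact h
    · exfalso
      rcases k with i | j
      · have := hMα i (fun h => hk (by rw [h])) n w₁ w₂ h1 h2 h3 h4 h5
        have := hsα i
        omega
      · have := hMx j n m w₁ w₂ h1 h2 h3 h4 h5
        have := hsx j
        omega
  -- upper bound for deg G n
  have hGup : ∀ n : ℕ, (a * G n).natDegree ≤ (∑ i, DA i) + (α 0 ^ n).natDegree := by
    intro n
    rw [hG, Finset.mul_sum]
    refine Polynomial.natDegree_sum_le_of_forall_le _ _ fun i _ => ?_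
    rw [← mul_assoc]
    refine Polynomial.natDegree_mul_le.trans (Nat.add_le_add ((hDA i n).trans (hsA i)) ?_)
    rw [Polynomial.natDegree_pow, Polynomial.natDegree_pow]
    exact Nat.mul_le_mul_left _ (Polynomial.natDegree_le_natDegree (hdeg i))
  have hGle : ∀ n : ℕ, (G n).natDegree ≤ (a * G n).natDegree := by
    intro n
    by_cases h0 : G n = 0
    · simp [h0]
    · rw [Polynomial.natDegree_mul ha h0]; omega
  set Q := ∑ n ∈ Finset.range (N₀ + 1), (a * G n).natDegree with hQ
  have hQle : ∀ n ≤ N₀, (a * G n).natDegree ≤ Q := fun n hn =>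
    Finset.single_le_sum (f := fun n => (a * G n).natDegree) (fun _ _ => Nat.zero_le _)
      (Finset.mem_range.mpr (by omega))
  -- lower bound for deg H m
  have hβdeg : 0 < (β 0).natDegree := by
    rw [Nat.pos_iff_ne_zero]
    intro h0
    exact hβ1 0 _ (Polynomial.eq_C_of_natDegree_eq_zero h0)
  have hHlow : ∀ m : ℕ, MB + ∑ j, Mβ j < m → m ≤ (-b * H m).natDegree + L := by
    intro m hm
    have hsum : -b * H m = ∑ k, (-b * (B k).eval (m : Polynomial ℂ)) * β k ^ m := by
      rw [hH, Finset.mul_sum]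
      exact Finset.sum_congr rfl fun i _ => by ring
    rcases hL (fun _ => m) (fun j => -b * (B j).eval (m : Polynomial ℂ))
      (fun j => (hDB j m).trans (hsB j)) (mul_ne_zero (neg_ne_zero.mpr hb) (hMB m (by omega)))
      with h | ⟨k, hk, w₁, w₂, h1, h2, h3, h4, h5⟩
    · rw [hsum]
      refine le_trans ?_ h.2
      rw [Polynomial.natDegree_pow]
      exact Nat.le_mul_of_pos_right _ hβdeg
    · exfalso
      have := hMβ k hk m w₁ w₂ h1 h2 h3 h4 h5
      have := hsβ k
      omega
  have hfin : ∀ (n m C : ℕ), a * G n - b * H m ≠ 0 →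
      (G n).natDegree ≤ (a * G n - b * H m).natDegree + C →
      (G n).degree ≤ (a * G n - b * H m).degree + (C : WithBot ℕ) := by
    intro n m C h0 h1
    rw [Polynomial.degree_eq_natDegree h0]
    refine Polynomial.degree_le_natDegree.trans ?_
    exact_mod_cast h1
  refine ⟨N₀ + MB + ∑ j, Mβ j + L + Q, K + (∑ i, DA i) + Q, fun n m hnm => ?_⟩
  by_cases hn : N₀ < n
  · obtain ⟨h1, h2⟩ := hlarge n m hn
    refine hfin n m _ h1 ?_
    have := hGup n
    have := hGle n
    omega
  · have hm : N₀ + MB + ∑ j, Mβ j + L + Q < m := by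
      rcases lt_max_iff.mp hnm with h | h
      · omega
      · exact h
    have h1 := hHlow m (by omega)
    have h2 := hQle n (by omega)
    have h3 := hGle n
    refine hfin n m _ ?_ (by omega)
    intro h0
    have h4 : -b * H m = -(a * G n) := by linear_combination h0
    rw [h4, Polynomial.natDegree_neg] at h1
    omega
end

section
/- Let $G_n = a_1(n)\alpha_1^n + \cdots + a_d(n)\alpha_d^n$ and $H_m = b_1(m)\beta_1^m + \cdots + b_t(m)\beta_t^m$ be two non-degenerate linear recurrence sequences defined over a function field $F$ in one variable over $\mathbb{C}$. Assume that no $\alpha_i$ and no $\beta_j$ is contained in $\mathbb{C}$, and that for every $j \in \{1,\ldots,t\}$ the pair $(\alpha_1, \beta_j)$ is multiplicatively independent. Fix $a, b \in F^*$. Then there is an effectively computable constant $B$ such that every pair $(n,m)$ of non-negative integers with $a G_n = b H_m$ satisfies $\max\{n,m\} \le B$; in particular the equation $a G_n = b H_m$ has only finitely many solutions $(n,m)$. -/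
/-- `f` lies in the field of constants `ℂ` of `F`. -/
def IsConst (F : Type*) [Field F] [Algebra ℂ F] (f : F) : Prop :=
  f ∈ Set.range (algebraMap ℂ F)

/-- `α` and `β` are multiplicatively independent: `α^r β^s ∈ ℂ` forces `r = s = 0`. -/
def MultIndep (F : Type*) [Field F] [Algebra ℂ F] (α β : F) : Prop :=
  ∀ r s : ℤ, IsConst F (α ^ r * β ^ s) → r = 0 ∧ s = 0

open scoped TensorProduct

theorem exists_deriv (F : Type*) [Field F] [Algebra ℂ F] [Algebra (RatFunc ℂ) F]
    [IsScalarTower ℂ (RatFunc ℂ) F] (hFF : FunctionField ℂ F) :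
    ∃ D : Derivation ℂ F F, D (algebraMap (RatFunc ℂ) F RatFunc.X) = 1 := by
  have : FiniteDimensional (RatFunc ℂ) F := hFF
  let _i : Algebra (Polynomial ℂ) F :=
    ((algebraMap (RatFunc ℂ) F).comp (algebraMap (Polynomial ℂ) (RatFunc ℂ))).toAlgebra
  have : IsScalarTower (Polynomial ℂ) (RatFunc ℂ) F := IsScalarTower.of_algebraMap_eq' rfl
  have : IsScalarTower ℂ (Polynomial ℂ) F := by
    refine IsScalarTower.of_algebraMap_eq fun x => ?_
    rw [IsScalarTower.algebraMap_apply (Polynomial ℂ) (RatFunc ℂ) F,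
      ← IsScalarTower.algebraMap_apply ℂ (Polynomial ℂ) (RatFunc ℂ),
      ← IsScalarTower.algebraMap_apply ℂ (RatFunc ℂ) F]
  have : Algebra.FormallyEtale (Polynomial ℂ) (RatFunc ℂ) :=
    Algebra.FormallyEtale.of_isLocalization (nonZeroDivisors (Polynomial ℂ))
  have : Algebra.FormallyEtale (RatFunc ℂ) F := Algebra.FormallyEtale.of_isSeparable _ _
  have : Algebra.FormallyEtale (Polynomial ℂ) F := Algebra.FormallyEtale.comp _ (RatFunc ℂ) _
  let e := KaehlerDifferential.tensorKaehlerEquivOfFormallyEtale ℂ (Polynomial ℂ) F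
  let φ : F ⊗[Polynomial ℂ] (Ω[Polynomial ℂ⁄ℂ]) →ₗ[F] F :=
    LinearMap.liftBaseChange F ((Algebra.linearMap (Polynomial ℂ) F).comp
      (KaehlerDifferential.polynomialEquiv ℂ).toLinearMap)
  refine ⟨(φ.comp e.symm.toLinearMap).compDer (KaehlerDifferential.D ℂ F), ?_⟩
  have h : algebraMap (RatFunc ℂ) F RatFunc.X = algebraMap (Polynomial ℂ) F Polynomial.X := by
    rw [IsScalarTower.algebraMap_apply (Polynomial ℂ) (RatFunc ℂ) F, RatFunc.algebraMap_X]
  rw [h]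
  have := KaehlerDifferential.tensorKaehlerEquivOfFormallyEtale_symm_D_algebraMap ℂ (Polynomial ℂ) F Polynomial.X
  change φ (e.symm _) = 1
  have h3 : φ (1 ⊗ₜ[Polynomial ℂ] (KaehlerDifferential.D ℂ (Polynomial ℂ)) Polynomial.X) = 1 := by
    simp [φ]
  rw [← h3]
  exact congrArg φ this

theorem const_of_transc {F : Type*} [Field F] [Algebra ℂ F] (D : Derivation ℂ F F)
   (y : F) (hy : ∀ x : F, IsAlgebraic (IntermediateField.adjoin ℂ {y}) x) (h : D y = 0) : ∀ x, D x = 0 := by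
  let C : IntermediateField ℂ F :=
    { carrier := {x | D x = 0}
      mul_mem' := by intro a b ha hb; simp_all
      add_mem' := by intro a b ha hb; simp_all
      algebraMap_mem' := by intro r; simp
      inv_mem' := by intro a ha; simp_all [Derivation.leibniz_inv] }
  have hC : ∀ x : C, D x = 0 := fun x => x.2
  have hle : IntermediateField.adjoin ℂ {y} ≤ C := by
    rw [IntermediateField.adjoin_le_iff, Set.singleton_subset_iff]; exact h
  have halg : Algebra.IsAlgebraic C F := ⟨fun x => by
    let _i := (IntermediateField.inclusion hle).toAlgebra
    have : IsScalarTower (IntermediateField.adjoin ℂ {y}) C F := IsScalarTower.of_algebraMap_eq fun x => rfl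
    exact (hy x).tower_top C⟩
  let D' : Derivation C F F := Derivation.mk'
    { toFun := D, map_add' := by simp, map_smul' := by
        intro c x
        simp [Algebra.smul_def, hC]} (by intro a b; simp)
  intro x
  have : Algebra.FormallyEtale C F := Algebra.FormallyEtale.of_isSeparable _ _
  have : D'.liftKaehlerDifferential (KaehlerDifferential.D C F x) = D' x := by simp
  have h2 : D' x = 0 := by rw [← this, Subsingleton.elim (KaehlerDifferential.D C F x) 0, map_zero]
  exact h2


theorem mem_of_isAlg {F : Type*} [Field F] [Algebra ℂ F] {y : F} (h : IsAlgebraic ℂ y) :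
    y ∈ Set.range (algebraMap ℂ F) := by
  have hs := IsAlgClosed.splits (minpoly ℂ y)
  have h2 : (minpoly ℂ y).degree = 1 :=
    IsAlgClosed.degree_eq_one_of_irreducible ℂ (minpoly.irreducible h.isIntegral)
  exact minpoly.mem_range_of_degree_eq_one ℂ y h2

theorem alg_over (F : Type*) [Field F] [Algebra ℂ F] [Algebra (RatFunc ℂ) F]
    [IsScalarTower ℂ (RatFunc ℂ) F] (hFF : FunctionField ℂ F) (y : F) (hy : Transcendental ℂ y) :
    ∀ x : F, IsAlgebraic (IntermediateField.adjoin ℂ {y}) x := by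
  have : FiniteDimensional (RatFunc ℂ) F := hFF
  have b0 := IsTranscendenceBasis.polynomial Unit ℂ
  have : Algebra.IsAlgebraic (Polynomial ℂ) (RatFunc ℂ) :=
    IsLocalization.isAlgebraic _ (nonZeroDivisors (Polynomial ℂ))
  have b1 := b0.algebraMap_comp (A := RatFunc ℂ)
  have b2 := b1.algebraMap_comp (A := F)
  have h2 := b2.lift_cardinalMk_eq_trdeg
  have h3 : AlgebraicIndependent ℂ (fun _ : Unit => y) :=
    algebraicIndependent_unique_type_iff.2 hy
  have h4 : IsTranscendenceBasis ℂ (fun _ : Unit => y) :=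
    h3.isTranscendenceBasis_of_lift_trdeg_le_of_finite h2.ge
  have h5 := h4.isAlgebraic_field
  rw [Set.range_const] at h5
  exact h5.isAlgebraic

theorem exists_deriv_const (F : Type*) [Field F] [Algebra ℂ F] [Algebra (RatFunc ℂ) F]
    [IsScalarTower ℂ (RatFunc ℂ) F] (hFF : FunctionField ℂ F) :
    ∃ D : Derivation ℂ F F, ∀ y, D y = 0 → y ∈ Set.range (algebraMap ℂ F) := by
  obtain ⟨D, hD⟩ := exists_deriv F hFF
  refine ⟨D, fun y hy => mem_of_isAlg ?_⟩
  by_contra h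
  have := const_of_transc D y (alg_over F hFF y h) hy (algebraMap (RatFunc ℂ) F RatFunc.X)
  rw [hD] at this
  exact one_ne_zero this

theorem exists_val {F : Type*} [Field F] [Algebra ℂ F] (x : F)
    (hx : x ∉ Set.range (algebraMap ℂ F)) :
    ∃ V : ValuationSubring F, V.valuation x ≠ 1 ∧ ∀ c : ℂ, c ≠ 0 → V.valuation (algebraMap ℂ F c) = 1 := by
  let R : Subring F := (algebraMap ℂ F).range
  have : IsIntegrallyClosedIn R F := by
    rw [Subring.isIntegrallyClosedIn_iff]
    rintro z ⟨p, hp, hz⟩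
    refine mem_of_isAlg (IsIntegral.isAlgebraic ?_)
    have hsurj : Function.Surjective (algebraMap ℂ F).rangeRestrict :=
      (algebraMap ℂ F).rangeRestrict_surjective
    obtain ⟨q, hq, -, hqm⟩ := Polynomial.lifts_and_natDegree_eq_and_monic
      ((Polynomial.mem_lifts p).2 (Polynomial.map_surjective _ hsurj p)) hp
    refine ⟨q, hqm, ?_⟩
    rw [← hq, Polynomial.eval₂_map] at hz
    exact hz
  obtain ⟨V, hV, hxV⟩ := Subring.exists_le_valuationSubring_of_isIntegrallyClosedIn (R := R) (x := x) hx
  refine ⟨V, fun h => hxV ((V.valuation_le_one_iff x).1 h.le), fun c hc => ?_⟩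
  have h1 : V.valuation (algebraMap ℂ F c) ≤ 1 := (V.valuation_le_one_iff _).2 (hV ⟨c, rfl⟩)
  have h2 : V.valuation (algebraMap ℂ F c⁻¹) ≤ 1 := (V.valuation_le_one_iff _).2 (hV ⟨c⁻¹, rfl⟩)
  refine le_antisymm h1 ?_
  rw [map_inv₀, map_inv₀] at h2
  have : V.valuation (algebraMap ℂ F c) ≠ 0 := by simpa using hc
  exact (inv_le_one₀ (zero_lt_iff.2 this)).1 h2


theorem indep_core {K : Type*} [Field K] (T : Subfield K) (D : K → K)
    (hadd : ∀ x y, D (x + y) = D x + D y) (hmul : ∀ x y, D (x * y) = D x * y + x * D y)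
    (hDT : ∀ x ∈ T, D x ∈ T) (hC : ∀ x, D x = 0 → x ∈ T) {ι : Type*} [DecidableEq ι] (f l : ι → K)
    (hl : ∀ i, l i ∈ T) (hf : ∀ i, D (f i) = l i * f i) (s : Finset ι) :
    ∀ g : ι → K, (∀ i, g i ∈ T) → 1 + ∑ i ∈ s, g i * f i = 0 → ∃ i ∈ s, f i ∈ T := by
  have h0 : D 0 = 0 := by simpa using hadd 0 0
  have h1 : D 1 = 0 := by simpa using hmul 1 1
  let Da : K →+ K := ⟨⟨D, h0⟩, hadd⟩
  have hsum : ∀ (s : Finset ι) (u : ι → K), D (∑ i ∈ s, u i) = ∑ i ∈ s, D (u i) :=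
    fun s u => map_sum Da u s
  induction s using Finset.strongInduction with
  | H s ih =>
  intro g hg hsm
  have hd : ∀ i, D (g i * f i) = (D (g i) + g i * l i) * f i := by
    intro i; rw [hmul, hf]; ring
  by_cases hall : ∀ i ∈ s, D (g i) + g i * l i = 0
  · have : ∃ i ∈ s, g i * f i ≠ 0 := by
      by_contra hcon
      push Not at hcon
      rw [Finset.sum_eq_zero hcon] at hsm
      simp at hsm
    obtain ⟨i, his, hi⟩ := this
    refine ⟨i, his, ?_⟩
    have hT : g i * f i ∈ T := hC _ (by rw [hd, hall i his, zero_mul])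
    have : f i = g i * f i / g i := by
      field_simp [left_ne_zero_of_mul hi]
    rw [this]
    exact T.div_mem hT (hg i)
  · push Not at hall
    obtain ⟨i₀, hi₀, hne⟩ := hall
    set c : ι → K := fun i => D (g i) + g i * l i with hc
    have hcT : ∀ i, c i ∈ T := fun i => T.add_mem (hDT _ (hg i)) (T.mul_mem (hg i) (hl i))
    have hcs : ∑ i ∈ s, c i * f i = 0 := by
      have := congrArg D hsm
      rw [hadd, h1, hsum, h0, zero_add] at this
      rw [← this]
      exact Finset.sum_congr rfl fun i _ => (hd i).symm
    obtain ⟨i, hi, hiT⟩ := ih (s.erase i₀) (Finset.erase_ssubset hi₀)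
      (fun i => g i - g i₀ / c i₀ * c i)
      (fun i => T.sub_mem (hg i) (T.mul_mem (T.div_mem (hg i₀) (hcT i₀)) (hcT i))) (by
        have e1 : ∑ i ∈ s, (g i - g i₀ / c i₀ * c i) * f i = ∑ i ∈ s, g i * f i := by
          have : ∀ i ∈ s, (g i - g i₀ / c i₀ * c i) * f i
              = g i * f i - g i₀ / c i₀ * (c i * f i) := fun i _ => by ring
          rw [Finset.sum_congr rfl this, Finset.sum_sub_distrib, ← Finset.mul_sum, hcs]
          simp
        rw [← Finset.add_sum_erase _ _ hi₀] at e1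
        have e2 : g i₀ - g i₀ / c i₀ * c i₀ = 0 := by
          rw [div_mul_cancel₀ _ hne, sub_self]
        rw [e2, zero_mul, zero_add] at e1
        rw [e1, hsm])
    exact ⟨i, Finset.mem_of_mem_erase hi, hiT⟩

/-- quotients of elements of `W` -/
def Quo {F : Type*} [Field F] [Algebra ℂ F] (W : Submodule ℂ F) (z : F) : Prop :=
  ∃ x ∈ W, ∃ y ∈ W, y ≠ 0 ∧ z = x / y

def Tame {F : Type*} [Field F] [Algebra ℂ F] {P : Type*} (U : Ultrafilter P) (x : P → F) : Prop :=
  ∃ W : Submodule ℂ F, W.FG ∧ ∀ᶠ p in (U : Filter P), Quo W (x p)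

section
variable {F : Type*} [Field F] [Algebra ℂ F] {P : Type*} {U : Ultrafilter P}

theorem Tame.congr {x y : P → F} (hx : Tame U x) (h : ∀ᶠ p in (U : Filter P), x p = y p) :
    Tame U y := by
  obtain ⟨W, hW, h1⟩ := hx
  refine ⟨W, hW, ?_⟩
  filter_upwards [h1, h] with p h2 h3
  rwa [← h3]

theorem Tame.of_fg {x : P → F} (W : Submodule ℂ F) (hW : W.FG)
    (h : ∀ᶠ p in (U : Filter P), x p ∈ W) : Tame U x := by
  refine ⟨W ⊔ 1, hW.sup ⟨{1}, by simp [Submodule.one_eq_span]⟩, ?_⟩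
  filter_upwards [h] with p hp
  exact ⟨x p, Submodule.mem_sup_left hp, 1, Submodule.mem_sup_right (Submodule.one_le.1 le_rfl),
    one_ne_zero, by simp⟩

theorem Tame.const (c : F) : Tame U (fun _ => c) :=
  Tame.of_fg (Submodule.span ℂ {c}) (Submodule.fg_span_singleton c)
    (Filter.Eventually.of_forall fun _ => Submodule.mem_span_singleton_self c)

theorem Tame.of_const {x : P → F} 
    (h : ∀ᶠ p in (U : Filter P), x p ∈ Set.range (algebraMap ℂ F)) : Tame U x := by
  refine Tame.of_fg (Submodule.span ℂ {1}) (Submodule.fg_span_singleton 1) ?_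
  filter_upwards [h] with p hp
  obtain ⟨c, hc⟩ := hp
  exact Submodule.mem_span_singleton.2 ⟨c, by rw [← hc, Algebra.algebraMap_eq_smul_one]⟩

theorem Tame.add {x y : P → F} (hx : Tame U x) (hy : Tame U y) : Tame U (x + y) := by
  obtain ⟨W, hW, h1⟩ := hx
  obtain ⟨W', hW', h1'⟩ := hy
  refine ⟨W * W', hW.mul hW', ?_⟩
  filter_upwards [h1, h1'] with p ⟨a, ha, b, hb, hb0, e⟩ ⟨a', ha', b', hb', hb0', e'⟩
  refine ⟨a * b' + b * a', add_mem (Submodule.mul_mem_mul ha hb') (Submodule.mul_mem_mul hb ha'),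
    b * b', Submodule.mul_mem_mul hb hb', mul_ne_zero hb0 hb0', ?_⟩
  rw [Pi.add_apply, e, e', div_add_div _ _ hb0 hb0']

theorem Tame.mul {x y : P → F} (hx : Tame U x) (hy : Tame U y) : Tame U (x * y) := by
  obtain ⟨W, hW, h1⟩ := hx
  obtain ⟨W', hW', h1'⟩ := hy
  refine ⟨W * W', hW.mul hW', ?_⟩
  filter_upwards [h1, h1'] with p ⟨a, ha, b, hb, hb0, e⟩ ⟨a', ha', b', hb', hb0', e'⟩
  refine ⟨a * a', Submodule.mul_mem_mul ha ha',
    b * b', Submodule.mul_mem_mul hb hb', mul_ne_zero hb0 hb0', ?_⟩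
  rw [Pi.mul_apply, e, e', div_mul_div_comm]

theorem Tame.neg {x : P → F} (hx : Tame U x) : Tame U (-x) := by
  obtain ⟨W, hW, h1⟩ := hx
  refine ⟨W, hW, ?_⟩
  filter_upwards [h1] with p ⟨a, ha, b, hb, hb0, e⟩
  exact ⟨-a, neg_mem ha, b, hb, hb0, by rw [Pi.neg_apply, e, neg_div]⟩

theorem Tame.inv {x : P → F} (hx : Tame U x) : Tame U (x⁻¹) := by
  obtain ⟨W, hW, h1⟩ := hx
  refine ⟨W, hW, ?_⟩
  filter_upwards [h1] with p ⟨a, ha, b, hb, hb0, e⟩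
  by_cases h : a = 0
  · exact ⟨0, zero_mem _, b, hb, hb0, by rw [Pi.inv_apply, e, h]; simp⟩
  · exact ⟨b, hb, a, ha, h, by rw [Pi.inv_apply, e, inv_div]⟩

theorem Tame.deriv (D : Derivation ℂ F F) {x : P → F} (hx : Tame U x) :
    Tame U (fun p => D (x p)) := by
  obtain ⟨W, hW, h1⟩ := hx
  have hDW := hW.map (D : F →ₗ[ℂ] F)
  refine ⟨(W * W.map (D : F →ₗ[ℂ] F)) ⊔ W * W, (hW.mul hDW).sup (hW.mul hW), ?_⟩
  filter_upwards [h1] with p ⟨a, ha, b, hb, hb0, e⟩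
  refine ⟨b * D a - a * D b, Submodule.mem_sup_left (sub_mem
    (Submodule.mul_mem_mul hb (Submodule.mem_map_of_mem ha))
    (Submodule.mul_mem_mul ha (Submodule.mem_map_of_mem hb))), b * b,
    Submodule.mem_sup_right (Submodule.mul_mem_mul hb hb), mul_ne_zero hb0 hb0, ?_⟩
  rw [e, Derivation.leibniz_div]
  simp only [smul_eq_mul]
  field_simp

open Filter in
/-- the tame subfield of the ultrapower -/
def tameField (F : Type*) [Field F] [Algebra ℂ F] {P : Type*} (U : Ultrafilter P) :
    Subfield (Germ (U : Filter P) F) where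
  carrier := {x | ∃ y : P → F, (y : Germ (U : Filter P) F) = x ∧ Tame U y}
  mul_mem' := by
    rintro _ _ ⟨x, rfl, hx⟩ ⟨y, rfl, hy⟩
    exact ⟨x * y, rfl, hx.mul hy⟩
  add_mem' := by
    rintro _ _ ⟨x, rfl, hx⟩ ⟨y, rfl, hy⟩
    exact ⟨x + y, rfl, hx.add hy⟩
  neg_mem' := by
    rintro _ ⟨x, rfl, hx⟩
    exact ⟨-x, rfl, hx.neg⟩
  inv_mem' := by
    rintro _ ⟨x, rfl, hx⟩
    exact ⟨x⁻¹, rfl, hx.inv⟩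
  one_mem' := ⟨fun _ => 1, rfl, Tame.const 1⟩
  zero_mem' := ⟨fun _ => 0, rfl, Tame.const 0⟩

open Filter in
theorem mem_tameField {x : P → F} : (x : Germ (U : Filter P) F) ∈ tameField F U ↔ Tame U x := by
  constructor
  · rintro ⟨y, h, hy⟩
    exact hy.congr (Germ.coe_eq.1 h)
  · exact fun h => ⟨x, rfl, h⟩

open Filter in
theorem tame_core (D : Derivation ℂ F F) (hD : ∀ y, D y = 0 → y ∈ Set.range (algebraMap ℂ F))
    {ι : Type*} [Fintype ι] [DecidableEq ι] (f l g : ι → P → F) (hf0 : ∀ i p, f i p ≠ 0)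
    (hl : ∀ i, Tame U (l i)) (hf : ∀ i p, D (f i p) = l i p * f i p)
    (hg : ∀ i, Tame U (g i)) (hs : ∀ᶠ p in (U : Filter P), ∑ i, g i p * f i p = 0)
    (i₀ : ι) (hi₀ : ∀ᶠ p in (U : Filter P), g i₀ p ≠ 0) :
    ∃ i, i ≠ i₀ ∧ Tame U (fun p => f i p / f i₀ p) := by
  have key := indep_core (tameField F U) (Germ.map D)
    (by
      intro x y
      induction x using Germ.inductionOn with | _ x
      induction y using Germ.inductionOn with | _ y
      refine Germ.coe_eq.2 (Eventually.of_forall fun p => ?_)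
      simp)
    (by
      intro x y
      induction x using Germ.inductionOn with | _ x
      induction y using Germ.inductionOn with | _ y
      refine Germ.coe_eq.2 (Eventually.of_forall fun p => ?_)
      simp; ring)
    (by
      rintro _ ⟨x, rfl, hx⟩
      exact ⟨_, rfl, hx.deriv D⟩)
    (by
      intro x hx
      induction x using Germ.inductionOn with | _ x
      refine mem_tameField.2 (Tame.of_const ?_)
      have := Germ.coe_eq.1 hx
      filter_upwards [this] with p hp
      exact hD _ hp)
    (fun i => ((fun p => f i p / f i₀ p : P → F) : Germ (U : Filter P) F))
    (fun i => ((l i - l i₀ : P → F) : Germ (U : Filter P) F))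
    (fun i => mem_tameField.2 (by rw [sub_eq_add_neg]; exact (hl i).add (hl i₀).neg))
    (by
      intro i
      refine Germ.coe_eq.2 (Eventually.of_forall fun p => ?_)
      simp only [Function.comp, Derivation.leibniz_div, hf, Pi.sub_apply, smul_eq_mul]
      have := hf0 i p
      have := hf0 i₀ p
      field_simp)
    (Finset.univ.erase i₀)
    (fun i => ((g i * (g i₀)⁻¹ : P → F) : Germ (U : Filter P) F))
    (fun i => mem_tameField.2 ((hg i).mul (hg i₀).inv))
    (by
      have : (1 + ∑ i ∈ Finset.univ.erase i₀, ((g i * (g i₀)⁻¹ : P → F) : Germ (U : Filter P) F) *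
          ((fun p => f i p / f i₀ p : P → F) : Germ (U : Filter P) F))
          = ((fun p => 1 + ∑ i ∈ Finset.univ.erase i₀, (g i p * (g i₀ p)⁻¹) * (f i p / f i₀ p) : P → F) :
            Germ (U : Filter P) F) := by
        have e := map_sum (Germ.coeRingHom (R := F) (U : Filter P))
          (fun i => (g i * (g i₀)⁻¹) * (fun p => f i p / f i₀ p : P → F)) (Finset.univ.erase i₀)
        have e2 : (fun p => 1 + ∑ i ∈ Finset.univ.erase i₀, (g i p * (g i₀ p)⁻¹) * (f i p / f i₀ p) : P → F)
          = 1 + ∑ i ∈ Finset.univ.erase i₀, (g i * (g i₀)⁻¹) * (fun p => f i p / f i₀ p : P → F) := by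
          ext p; simp
        rw [e2]
        exact congrArg (1 + ·) e.symm
      rw [this]
      refine Germ.coe_eq.2 ?_
      filter_upwards [hs, hi₀] with p hp hp0
      have h2 := hf0 i₀ p
      rw [← Finset.add_sum_erase _ _ (Finset.mem_univ i₀)] at hp
      have h3 : ∑ i ∈ Finset.univ.erase i₀, (g i p * (g i₀ p)⁻¹) * (f i p / f i₀ p)
        = (∑ i ∈ Finset.univ.erase i₀, g i p * f i p) / (g i₀ p * f i₀ p) := by
        rw [Finset.sum_div]
        refine Finset.sum_congr rfl fun i _ => ?_
        field_simp
      rw [h3, eq_neg_of_add_eq_zero_right hp]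
      field_simp
      simp)
  obtain ⟨i, hi, hT⟩ := key
  exact ⟨i, Finset.ne_of_mem_erase hi, mem_tameField.1 hT⟩

theorem Tame.eval (A : Polynomial F) (n : P → ℕ) : Tame U (fun p => A.eval (n p : F)) := by
  induction A using Polynomial.induction_on' with
  | add p q hp hq => simp only [Polynomial.eval_add]; exact hp.add hq
  | monomial k a =>
    simp only [Polynomial.eval_monomial]
    refine (Tame.const a).mul (Tame.of_const (Filter.Eventually.of_forall fun p => ?_))
    exact ⟨(n p : ℂ) ^ k, by simp⟩

theorem val_finite {Γ : Type*} [LinearOrderedCommGroupWithZero Γ] (v : Valuation F Γ)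
    (hv : ∀ c : ℂ, c ≠ 0 → v (algebraMap ℂ F c) = 1) (W : Submodule ℂ F) (hW : W.FG) :
    (v '' (W : Set F)).Finite := by
  obtain ⟨s, hs, rfl⟩ := Submodule.fg_def.1 hW
  induction s, hs using Set.Finite.induction_on with
  | empty => simp
  | @insert w s _ _ ih =>
    set W := Submodule.span ℂ s
    have ih := ih (Submodule.fg_span ‹_›)
    have hsub : (v '' {z | ∃ a ∈ W, z = w + a} \ v '' (W : Set F)).Subsingleton := by
      have aux : ∀ a ∈ W, ∀ b ∈ W, v (w + b) ∉ v '' (W : Set F) → ¬ v (w + a) < v (w + b) := by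
        intro a ha b hb hnb hlt
        apply hnb
        refine ⟨a - b, sub_mem ha hb, ?_⟩
        have : a - b = (w + a) - (w + b) := by ring
        rw [this, Valuation.map_sub_eq_of_lt_right _ hlt]
      rintro _ ⟨⟨_, ⟨a, ha, rfl⟩, rfl⟩, hna⟩ _ ⟨⟨_, ⟨b, hb, rfl⟩, rfl⟩, hnb⟩
      exact le_antisymm (not_lt.1 (aux b hb a ha hna)) (not_lt.1 (aux a ha b hb hnb))
    refine (ih.union hsub.finite).subset ?_
    rintro _ ⟨z, hz, rfl⟩
    obtain ⟨c, a, ha, rfl⟩ := Submodule.mem_span_insert.1 hz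
    by_cases hc : c = 0
    · left; exact ⟨a, ha, by simp [hc]⟩
    · have : v (c • w + a) = v (w + c⁻¹ • a) := by
        have e : c • w + a = algebraMap ℂ F c * (w + c⁻¹ • a) := by
          rw [← Algebra.smul_def, smul_add, smul_inv_smul₀ hc]
        rw [e, map_mul, hv c hc, one_mul]
      rw [this]
      by_cases h : v (w + c⁻¹ • a) ∈ v '' (W : Set F)
      · exact Or.inl h
      · exact Or.inr ⟨⟨_, ⟨_, W.smul_mem _ ha, rfl⟩, rfl⟩, h⟩

theorem Tame.val_const {Γ : Type*} [LinearOrderedCommGroupWithZero Γ] (v : Valuation F Γ)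
    (hv : ∀ c : ℂ, c ≠ 0 → v (algebraMap ℂ F c) = 1) {x : P → F} (hx : Tame U x) :
    ∃ γ : Γ, ∀ᶠ p in (U : Filter P), v (x p) = γ := by
  obtain ⟨W, hW, h⟩ := hx
  have hfin := val_finite v hv W hW
  have hfin2 := hfin.image2 (fun a b => a / b) hfin
  have : ∀ᶠ p in (U : Filter P), ∃ γ ∈ Set.image2 (fun a b => a / b) (v '' (W : Set F)) (v '' (W : Set F)), v (x p) = γ := by
    filter_upwards [h] with p ⟨a, ha, b, hb, _, e⟩
    exact ⟨_, ⟨v a, ⟨a, ha, rfl⟩, v b, ⟨b, hb, rfl⟩, rfl⟩, by rw [e, map_div₀]⟩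
  obtain ⟨γ, _, hγ⟩ := (Ultrafilter.eventually_exists_mem_iff hfin2).1 this
  exact ⟨γ, hγ⟩
end

theorem pow_const_contra {F : Type*} [Field F] [Algebra ℂ F] {P : Type*} {U : Ultrafilter P}
    (n : P → ℕ) (hn : ∀ k, ∀ᶠ p in (U : Filter P), n p ≠ k) (γ : F) (h0 : γ ≠ 0)
    (hγ : γ ∉ Set.range (algebraMap ℂ F)) (hT : Tame U (fun p => γ ^ n p)) : False := by
  obtain ⟨V, hV, hc⟩ := exists_val γ hγ
  obtain ⟨c, h⟩ := hT.val_const V.valuation hc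
  obtain ⟨p, hp⟩ := h.exists
  obtain ⟨q, hq, hqn⟩ := (h.and (hn (n p))).exists
  rw [map_pow, ← hp, map_pow] at hq
  have hv0 : V.valuation γ ≠ 0 := by simpa using h0
  apply hqn
  by_contra hne
  apply hV
  exact (pow_right_injective₀ (zero_lt_iff.2 hv0) hV) hq |> fun h => absurd h hne

theorem zpow_eq_one {Γ : Type*} [LinearOrderedCommGroupWithZero Γ] {x : Γ} (hx : x ≠ 0) {k : ℤ}
    (hk : k ≠ 0) (h : x ^ k = 1) : x = 1 := by
  by_contra h1
  have := zpow_right_injective₀ (zero_lt_iff.2 hx) h1 (h.trans (zpow_zero x).symm)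
  exact hk this

theorem pair_const_contra {F : Type*} [Field F] [Algebra ℂ F] {U : Ultrafilter (ℕ × ℕ)}
    (hU : ∀ q, ∀ᶠ p in (U : Filter (ℕ × ℕ)), p ≠ q) (α β : F) (hα : α ≠ 0) (hβ : β ≠ 0)
    (hα1 : α ∉ Set.range (algebraMap ℂ F))
    (hi : ∀ r s : ℤ, α ^ r * β ^ s ∈ Set.range (algebraMap ℂ F) → r = 0 ∧ s = 0)
    (hT : Tame U (fun p => β ^ p.2 / α ^ p.1)) : False := by
  -- equality of values at two points
  have aux : ∀ (V : ValuationSubring F) (p q : ℕ × ℕ),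
      V.valuation (β ^ p.2 / α ^ p.1) = V.valuation (β ^ q.2 / α ^ q.1) →
      V.valuation (α ^ ((q.1 : ℤ) - p.1) * β ^ ((p.2 : ℤ) - q.2)) = 1 := by
    intro V p q h
    have e : α ^ ((q.1 : ℤ) - p.1) * β ^ ((p.2 : ℤ) - q.2)
        = (β ^ p.2 / α ^ p.1) / (β ^ q.2 / α ^ q.1) := by
      rw [zpow_sub₀ hα, zpow_sub₀ hβ]
      simp only [zpow_natCast]
      field_simp
    rw [e, map_div₀, h, div_self]
    have : β ^ q.2 / α ^ q.1 ≠ 0 := div_ne_zero (pow_ne_zero _ hβ) (pow_ne_zero _ hα)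
    simpa using this
  obtain ⟨V, hV, hc⟩ := exists_val α hα1
  obtain ⟨c, h⟩ := hT.val_const V.valuation hc
  obtain ⟨p, hp⟩ := h.exists
  obtain ⟨q, hq, hqp⟩ := (h.and (hU p)).exists
  have h1 := aux V p q (hp.trans hq.symm)
  set r : ℤ := (q.1 : ℤ) - p.1 with hr
  set s : ℤ := (p.2 : ℤ) - q.2 with hs
  have hrs : ¬ (r = 0 ∧ s = 0) := by
    rintro ⟨h1, h2⟩
    apply hqp
    ext <;> omega
  obtain ⟨V', hV', hc'⟩ := exists_val _ (fun hh => hrs (hi r s hh))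
  obtain ⟨c', h'⟩ := hT.val_const V'.valuation hc'
  obtain ⟨p', hp', hp''⟩ := (h.and h').exists
  obtain ⟨q', ⟨hq', hq''⟩, hqp'⟩ := ((h.and h').and (hU p')).exists
  have h2 := aux V p' q' (hp'.trans hq'.symm)
  have h3 := aux V' p' q' (hp''.trans hq''.symm)
  set r' : ℤ := (q'.1 : ℤ) - p'.1 with hr'
  set s' : ℤ := (p'.2 : ℤ) - q'.2 with hs'
  have hrs' : r' ≠ 0 ∨ s' ≠ 0 := by
    by_contra hcon
    push Not at hcon
    apply hqp'
    ext <;> omega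
  have hdet : r * s' - r' * s = 0 := by
    by_contra hne
    apply hV
    refine zpow_eq_one (by simpa using hα) hne ?_
    have e : α ^ (r * s' - r' * s) = (α ^ r * β ^ s) ^ s' / (α ^ r' * β ^ s') ^ s := by
      rw [zpow_sub₀ hα, mul_zpow, mul_zpow, ← zpow_mul, ← zpow_mul, ← zpow_mul, ← zpow_mul,
        mul_comm s' s]
      have := zpow_ne_zero (s * s') hβ
      have := zpow_ne_zero (r' * s) hα
      field_simp
    rw [← map_zpow₀, e, map_div₀, map_zpow₀, map_zpow₀, h1, h2]
    simp
  have hne0 : V'.valuation (α ^ r * β ^ s) ≠ 0 := by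
    have : α ^ r * β ^ s ≠ 0 := mul_ne_zero (zpow_ne_zero _ hα) (zpow_ne_zero _ hβ)
    simpa only [ne_eq, map_eq_zero] using this
  apply hV'
  rcases hrs' with h0 | h0
  · refine zpow_eq_one hne0 h0 ?_
    have e : (α ^ r * β ^ s) ^ r' = (α ^ r' * β ^ s') ^ r := by
      rw [mul_zpow, mul_zpow, ← zpow_mul, ← zpow_mul, ← zpow_mul, ← zpow_mul, mul_comm r' r,
        show s * r' = s' * r by linarith]
    rw [← map_zpow₀, e, map_zpow₀, h3, one_zpow]
  · refine zpow_eq_one hne0 h0 ?_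
    have e : (α ^ r * β ^ s) ^ s' = (α ^ r' * β ^ s') ^ s := by
      rw [mul_zpow, mul_zpow, ← zpow_mul, ← zpow_mul, ← zpow_mul, ← zpow_mul, mul_comm s s',
        show r * s' = r' * s by linarith]
    rw [← map_zpow₀, e, map_zpow₀, h3, one_zpow]

theorem eval_ne_zero {F : Type*} [Field F] [CharZero F] {P : Type*} {U : Ultrafilter P}
    (n : P → ℕ) (hn : ∀ k, ∀ᶠ p in (U : Filter P), n p ≠ k) (A : Polynomial F) (hA : A ≠ 0) :
    ∀ᶠ p in (U : Filter P), A.eval (n p : F) ≠ 0 := by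
  have hfin : {k : ℕ | A.eval (k : F) = 0}.Finite := by
    have := (Polynomial.finite_setOfPred_isRoot hA).preimage
      (f := fun k : ℕ => (k : F)) (Nat.cast_injective.injOn)
    exact this
  have : ∀ᶠ p in (U : Filter P), ∀ k ∈ {k : ℕ | A.eval (k : F) = 0}, n p ≠ k :=
    (Filter.eventually_all_finite hfin).2 fun k _ => hn k
  filter_upwards [this] with p hp h
  exact hp _ h rfl

theorem log_pow {F : Type*} [Field F] [Algebra ℂ F] (D : Derivation ℂ F F) (x : F) (hx : x ≠ 0)
    (n : ℕ) : D (x ^ n) = ((n : F) * (D x / x)) * x ^ n := by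
  rw [Derivation.leibniz_pow]
  rcases n with _ | n
  · simp
  · simp only [nsmul_eq_mul, smul_eq_mul, Nat.add_sub_cancel]
    field_simp
    ring

theorem Tame.log {F : Type*} [Field F] [Algebra ℂ F] {P : Type*} {U : Ultrafilter P} (c : F)
    (n : P → ℕ) : Tame U (fun p => (n p : F) * c) := by
  have := (Tame.eval (U := U) (Polynomial.X : Polynomial F) n).mul (Tame.const c)
  simp only [Polynomial.eval_X] at this
  exact this

theorem stmt_4
    (F : Type*) [Field F] [Algebra ℂ F] [Algebra (RatFunc ℂ) F]
    [IsScalarTower ℂ (RatFunc ℂ) F] (hFF : FunctionField ℂ F)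
    (d t : ℕ)
    -- the data of the two linear recurrence sequences
    (α : Fin (d + 1) → F) (A : Fin (d + 1) → Polynomial F)
    (β : Fin (t + 1) → F) (B : Fin (t + 1) → Polynomial F)
    (hα0 : ∀ i, α i ≠ 0) (hA0 : ∀ i, A i ≠ 0)
    (hβ0 : ∀ j, β j ≠ 0) (hB0 : ∀ j, B j ≠ 0)
    (hαinj : Function.Injective α) (hβinj : Function.Injective β)
    -- non-degeneracy
    (hGnd : ∀ i j, i ≠ j → ¬ IsConst F (α i / α j))
    (hHnd : ∀ i j, i ≠ j → ¬ IsConst F (β i / β j))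
    -- no `αᵢ` and no `βⱼ` lies in `ℂ`
    (hα1 : ∀ i, ¬ IsConst F (α i)) (hβ1 : ∀ j, ¬ IsConst F (β j))
    -- `(α₁, βⱼ)` multiplicatively independent for all `j`
    (hindep : ∀ j, MultIndep F (α 0) (β j))
    (a b : F) (ha : a ≠ 0) (hb : b ≠ 0)
    (G H : ℕ → F)
    (hG : ∀ n : ℕ, G n = ∑ i, (A i).eval (n : F) * α i ^ n)
    (hH : ∀ m : ℕ, H m = ∑ j, (B j).eval (m : F) * β j ^ m) :
    ∃ B' : ℕ, (∀ n m : ℕ, a * G n = b * H m → max n m ≤ B') ∧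
      {p : ℕ × ℕ | a * G p.1 = b * H p.2}.Finite := by
  have : CharZero F := charZero_of_injective_algebraMap (algebraMap ℂ F).injective
  have hfin : {p : ℕ × ℕ | a * G p.1 = b * H p.2}.Finite := by
    by_contra hinf
    obtain ⟨D, hD⟩ := exists_deriv_const F hFF
    have hne : (Filter.cofinite ⊓ Filter.principal {p : ℕ × ℕ | a * G p.1 = b * H p.2}).NeBot :=
      Set.Infinite.cofinite_inf_principal_neBot hinf
    let U := Ultrafilter.of (Filter.cofinite ⊓ Filter.principal {p : ℕ × ℕ | a * G p.1 = b * H p.2})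
    have hUle := Ultrafilter.of_le
      (Filter.cofinite ⊓ Filter.principal {p : ℕ × ℕ | a * G p.1 = b * H p.2})
    have hUsol : ∀ᶠ p in (U : Filter (ℕ × ℕ)), a * G p.1 = b * H p.2 :=
      hUle.trans inf_le_right (Filter.mem_principal_self _)
    have hU : ∀ q, ∀ᶠ p in (U : Filter (ℕ × ℕ)), p ≠ q := fun q =>
      hUle.trans inf_le_left (Set.finite_singleton q).compl_mem_cofinite
    by_cases hn : ∀ k, ∀ᶠ p in (U : Filter (ℕ × ℕ)), p.1 ≠ k
    · obtain ⟨i, hi, hT⟩ := tame_core (U := U) D hD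
        (Sum.elim (fun i p => α i ^ p.1) (fun j p => β j ^ p.2) :
          Fin (d + 1) ⊕ Fin (t + 1) → ℕ × ℕ → F)
        (Sum.elim (fun i p => (p.1 : F) * (D (α i) / α i)) (fun j p => (p.2 : F) * (D (β j) / β j)))
        (Sum.elim (fun i p => a * (A i).eval (p.1 : F)) (fun j p => -b * (B j).eval (p.2 : F)))
        (by
          rintro (i | j) p
          · exact pow_ne_zero _ (hα0 i)
          · exact pow_ne_zero _ (hβ0 j))
        (by
          rintro (i | j)
          · exact Tame.log _ Prod.fst
          · exact Tame.log _ Prod.snd)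
        (by
          rintro (i | j) p
          · exact log_pow D _ (hα0 i) _
          · exact log_pow D _ (hβ0 j) _)
        (by
          rintro (i | j)
          · exact (Tame.const a).mul (Tame.eval (A i) Prod.fst)
          · exact (Tame.const (-b)).mul (Tame.eval (B j) Prod.snd))
        (by
          filter_upwards [hUsol] with p hp
          rw [hG, hH, Finset.mul_sum, Finset.mul_sum] at hp
          rw [Fintype.sum_sum_type]
          simp only [Sum.elim_inl, Sum.elim_inr, mul_assoc, hp, neg_mul, Finset.sum_neg_distrib]
          ring)
        (Sum.inl 0)
        (by
          filter_upwards [eval_ne_zero (U := U) Prod.fst hn (A 0) (hA0 0)] with p hp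
          exact mul_ne_zero ha hp)
      rcases i with i | j
      · have hi0 : i ≠ 0 := fun h => hi (by rw [h])
        simp only [Sum.elim_inl, ← div_pow] at hT
        exact pow_const_contra Prod.fst hn _ (div_ne_zero (hα0 i) (hα0 0)) (hGnd i 0 hi0) hT
      · simp only [Sum.elim_inl, Sum.elim_inr] at hT
        exact pair_const_contra hU _ _ (hα0 0) (hβ0 j) (hα1 0) (hindep j) hT
    · push Not at hn
      obtain ⟨k, hk⟩ := hn
      have hm : ∀ l, ∀ᶠ p in (U : Filter (ℕ × ℕ)), p.2 ≠ l := by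
        intro l
        filter_upwards [hk, hU (k, l)] with p h1 h2 h3
        exact h2 (Prod.ext h1 h3)
      obtain ⟨i, hi, hT⟩ := tame_core (U := U) D hD
        (fun j p => (Option.elim j 1 β) ^ p.2 : Option (Fin (t + 1)) → ℕ × ℕ → F)
        (fun j p => (p.2 : F) * (D (Option.elim j 1 β) / (Option.elim j 1 β)))
        (fun j p => Option.elim j (- (a * G k)) (fun j => b * (B j).eval (p.2 : F)))
        (by
          rintro (_ | j) p
          · simp
          · exact pow_ne_zero _ (hβ0 j))
        (fun j => Tame.log _ Prod.snd)
        (by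
          rintro (_ | j) p
          · exact log_pow D _ one_ne_zero _
          · exact log_pow D _ (hβ0 j) _)
        (by
          rintro (_ | j)
          · exact Tame.const _
          · exact (Tame.const b).mul (Tame.eval (B j) Prod.snd))
        (by
          filter_upwards [hUsol, hk] with p hp hpk
          rw [hpk, hH, Finset.mul_sum] at hp
          rw [Fintype.sum_option]
          simp only [Option.elim, mul_assoc, hp, one_pow]
          ring)
        (some 0)
        (by
          filter_upwards [eval_ne_zero (U := U) Prod.snd hm (B 0) (hB0 0)] with p hp
          exact mul_ne_zero hb hp)
      rcases i with _ | j
      · have h2 := hT.inv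
        refine pow_const_contra (U := U) Prod.snd hm _ (hβ0 0) (hβ1 0) (h2.congr ?_)
        refine Filter.Eventually.of_forall fun p => ?_
        simp
      · have hi0 : j ≠ 0 := fun h => hi (by rw [h])
        simp only [Option.elim, ← div_pow] at hT
        exact pow_const_contra Prod.snd hm _ (div_ne_zero (hβ0 j) (hβ0 0)) (hHnd j 0 hi0) hT
  obtain ⟨N, hN⟩ := (hfin.image fun p : ℕ × ℕ => max p.1 p.2).bddAbove
  exact ⟨N, fun n m h => hN ⟨(n, m), h, rfl⟩, hfin⟩
end

section
/- Let $(G_n)_{n=0}^\infty$ be a non-degenerate linear recurrence sequence taking values in a function field $F$ in one variable over $\mathbb{C}$, with power sum representation $G_n = a_1(n)\alpha_1^n + \cdots + a_t(n)\alpha_t^n$, let $L = F(\alpha_1, \ldots, \alpha_t)$ be the splitting field of its characteristic polynomial, and let $\mu$ be a valuation on $L$. Then there are effectively computable constants $C^+$ and $C^-$, independent of $n$, such that for every sufficiently large $n$ one has $C^- + n \cdot \min_{j=1,\ldots,t} \mu(\alpha_j) \le \mu(G_n) \le C^+ + n \cdot \min_{j=1,\ldots,t} \mu(\alpha_j)$.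 -/
/-!
STATEMENT 8: Growth of a non-degenerate linear recurrence sequence over a
function field: `C⁻ + n · min_j μ(αⱼ) ≤ μ(Gₙ) ≤ C⁺ + n · min_j μ(αⱼ)` for all
sufficiently large `n`, where `μ` is a valuation on the splitting field
`L = F(α₁, …, α_t)`.
-/

/-- A (normalized discrete) valuation on a function field `F` over `ℂ`. -/
structure FFValuation (F : Type*) [Field F] [Algebra ℂ F] where
  v : F → WithTop ℤ
  v_zero : v 0 = ⊤
  v_ne_top : ∀ f : F, f ≠ 0 → v f ≠ ⊤
  v_mul : ∀ f g : F, v (f * g) = v f + v g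
  v_add : ∀ f g : F, min (v f) (v g) ≤ v (f + g)
  v_const : ∀ c : ℂ, c ≠ 0 → v (algebraMap ℂ F c) = 0
  v_exists_one : ∃ f : F, v f = 1

/-! ### Basic valuation facts -/

namespace FFValuation

variable {L : Type*} [Field L] [Algebra ℂ L] (μ : FFValuation L)

theorem v_one : μ.v 1 = 0 := by
  simpa using μ.v_const 1 one_ne_zero

theorem exists_int {f : L} (hf : f ≠ 0) : ∃ k : ℤ, μ.v f = k := by
  obtain ⟨k, hk⟩ := WithTop.ne_top_iff_exists.1 (μ.v_ne_top f hf)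
  exact ⟨k, hk.symm⟩

theorem v_neg (f : L) : μ.v (-f) = μ.v f := by
  have h := μ.v_const (-1) (by norm_num)
  have : -f = algebraMap ℂ L (-1) * f := by simp
  rw [this, μ.v_mul, h, zero_add]

theorem le_add {c : WithTop ℤ} {f g : L} (hf : c ≤ μ.v f) (hg : c ≤ μ.v g) :
    c ≤ μ.v (f + g) := (le_min hf hg).trans (μ.v_add f g)

theorem le_sub {c : WithTop ℤ} {f g : L} (hf : c ≤ μ.v f) (hg : c ≤ μ.v g) :
    c ≤ μ.v (f - g) := by
  rw [sub_eq_add_neg]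
  exact μ.le_add hf (by rwa [μ.v_neg])

theorem le_sum {ι : Type*} {c : WithTop ℤ} (s : Finset ι) (f : ι → L)
    (h : ∀ i ∈ s, c ≤ μ.v (f i)) : c ≤ μ.v (∑ i ∈ s, f i) := by
  classical
  induction s using Finset.induction_on with
  | empty => simp [μ.v_zero]
  | insert a s ha ih =>
    rw [Finset.sum_insert ha]
    exact μ.le_add (h a (by simp)) (ih fun i hi => h i (by simp [hi]))

theorem v_pow (f : L) (n : ℕ) : μ.v (f ^ n) = n • μ.v f := by
  induction n with
  | zero => simp [μ.v_one]
  | succ n ih => rw [pow_succ, μ.v_mul, ih, succ_nsmul]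

theorem v_constC (c : ℂ) : 0 ≤ μ.v (algebraMap ℂ L c) := by
  by_cases hc : c = 0
  · simp [hc, μ.v_zero]
  · rw [μ.v_const c hc]

theorem v_natCast (n : ℕ) : 0 ≤ μ.v (n : L) := by
  simpa using μ.v_constC (n : ℂ)

theorem v_intCast (n : ℤ) : 0 ≤ μ.v (n : L) := by
  simpa using μ.v_constC (n : ℂ)

theorem v_inv {f : L} {k : ℤ} (h : μ.v f = k) : μ.v f⁻¹ = ((-k : ℤ) : WithTop ℤ) := by
  have hf : f ≠ 0 := by
    rintro rfl
    rw [μ.v_zero] at h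
    exact absurd h (by simp)
  obtain ⟨m, hm⟩ := μ.exists_int (inv_ne_zero hf)
  have h1 := μ.v_mul f f⁻¹
  rw [mul_inv_cancel₀ hf, μ.v_one, h, hm] at h1
  have h2 : (0 : ℤ) = k + m := by exact_mod_cast h1
  rw [hm]
  congr 1
  omega

theorem v_pow_int {f : L} {k : ℤ} (h : μ.v f = k) (n : ℕ) :
    μ.v (f ^ n) = ((n * k : ℤ) : WithTop ℤ) := by
  rw [μ.v_pow, h, ← WithTop.coe_nsmul, nsmul_eq_mul]

theorem v_zpow_int {f : L} {k : ℤ} (h : μ.v f = k) (n : ℤ) :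
    μ.v (f ^ n) = ((n * k : ℤ) : WithTop ℤ) := by
  obtain ⟨m, rfl | rfl⟩ := n.eq_nat_or_neg
  · rw [zpow_natCast, μ.v_pow_int h]
  · rw [zpow_neg, zpow_natCast, μ.v_inv (μ.v_pow_int h m)]
    congr 1
    ring

/-- A polynomial evaluated at naturals: lower bound. -/
theorem poly_lower (P : Polynomial L) :
    ∃ C : ℤ, ∀ n : ℕ, (C : WithTop ℤ) ≤ μ.v (P.eval (n : L)) := by
  have hC : ∃ C : ℤ, ∀ i ∈ P.support, (C : WithTop ℤ) ≤ μ.v (P.coeff i) := by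
    have : ∀ s : Finset ℕ, ∃ C : ℤ, ∀ i ∈ s, (C : WithTop ℤ) ≤ μ.v (P.coeff i) := by
      intro s
      induction s using Finset.induction_on with
      | empty => exact ⟨0, by simp⟩
      | insert a s ha ih =>
        obtain ⟨C, hC⟩ := ih
        by_cases h0 : P.coeff a = 0
        · refine ⟨C, fun i hi => ?_⟩
          rcases Finset.mem_insert.1 hi with rfl | hi
          · simp [h0, μ.v_zero]
          · exact hC i hi
        · obtain ⟨k, hk⟩ := μ.exists_int h0
          refine ⟨min C k, fun i hi => ?_⟩
          rcases Finset.mem_insert.1 hi with rfl | hi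
          · rw [hk]; exact_mod_cast min_le_right _ _
          · exact le_trans (by exact_mod_cast min_le_left _ _) (hC i hi)
    exact this _
  obtain ⟨C, hC⟩ := hC
  refine ⟨C, fun n => ?_⟩
  rw [Polynomial.eval_eq_sum, Polynomial.sum_def]
  refine μ.le_sum _ _ fun i hi => ?_
  rw [μ.v_mul]
  have h1 : 0 ≤ μ.v ((n : L) ^ i) := by
    have := μ.v_natCast (n ^ i)
    simpa using this
  simpa using add_le_add (hC i hi) h1

/-- A nonzero polynomial evaluated at large naturals: upper bound. -/
theorem poly_upper [CharZero L] (P : Polynomial L) (hP : P ≠ 0) :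
    ∃ C : ℤ, ∃ N : ℕ, ∀ n : ℕ, N ≤ n → μ.v (P.eval (n : L)) ≤ (C : WithTop ℤ) := by
  classical
  obtain ⟨C, hC⟩ := μ.exists_int (Polynomial.leadingCoeff_ne_zero.2 hP)
  refine ⟨C, ?_⟩
  by_contra hcon
  push Not at hcon
  have hinf : {n : ℕ | (C : WithTop ℤ) < μ.v (P.eval (n : L))}.Infinite := by
    rw [Set.infinite_iff_exists_gt]
    intro a
    obtain ⟨n, hn, h⟩ := hcon (a + 1)
    exact ⟨n, h, by omega⟩
  obtain ⟨s, hs, hcard⟩ := hinf.exists_subset_card_eq (P.natDegree + 1)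
  have hdeg : (s.card : WithBot ℕ) = P.degree + 1 := by
    rw [hcard, Polynomial.degree_eq_natDegree hP]; push_cast; rfl
  have hsum := Lagrange.leadingCoeff_eq_sum (s := s) (v := fun n : ℕ => (n : L))
    (fun a _ b _ h => Nat.cast_injective (R := L) h) hdeg
  have hle : ((C + 1 : ℤ) : WithTop ℤ) ≤ μ.v P.leadingCoeff := by
    rw [hsum]
    refine μ.le_sum _ _ fun i hi => ?_
    have hconst : μ.v (∏ j ∈ s.erase i, ((i : L) - (j : L)))⁻¹ = 0 := by
      have : (∏ j ∈ s.erase i, ((i : L) - (j : L)))⁻¹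
          = algebraMap ℂ L (∏ j ∈ s.erase i, ((i : ℂ) - (j : ℂ)))⁻¹ := by
        simp [map_prod]
      rw [this]
      apply μ.v_const
      apply inv_ne_zero
      rw [Finset.prod_ne_zero_iff]
      intro j hj
      rw [sub_ne_zero]
      exact fun h => (Finset.ne_of_mem_erase hj) (by exact_mod_cast h.symm)
    rw [div_eq_mul_inv, μ.v_mul, hconst, add_zero]
    have h := hs hi
    change (C : WithTop ℤ) < _ at h
    revert h
    generalize μ.v (Polynomial.eval (i : L) P) = z
    cases z with
    | top => simp
    | coe z => intro h; exact_mod_cast Int.add_one_le_of_lt (by exact_mod_cast h)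
  rw [hC] at hle
  have : C + 1 ≤ C := by exact_mod_cast hle
  omega

end FFValuation
/-! ### Derivations -/

section Deriv

open Polynomial

variable {L : Type*} [Field L] [Algebra ℂ L]

open TensorProduct in
/-- The derivation `d/dX` extends to a function field. -/
theorem ff_exists_deriv [Algebra (RatFunc ℂ) L] [FiniteDimensional (RatFunc ℂ) L]
    [Algebra ℂ[X] L] [IsScalarTower ℂ[X] (RatFunc ℂ) L] [IsScalarTower ℂ ℂ[X] L] :
    ∃ δ : Derivation ℂ L L, ∀ p : ℂ[X], δ (algebraMap ℂ[X] L p) =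
      algebraMap ℂ[X] L (derivative p) := by
  have : Algebra.FormallyEtale ℂ[X] (RatFunc ℂ) :=
    Algebra.FormallyEtale.of_isLocalization (nonZeroDivisors ℂ[X])
  have : CharZero (RatFunc ℂ) := algebraRat.charZero _
  have : Algebra.FormallyEtale (RatFunc ℂ) L := Algebra.FormallyEtale.of_isSeparable _ _
  have : Algebra.FormallyEtale ℂ[X] L := Algebra.FormallyEtale.comp ℂ[X] (RatFunc ℂ) L
  let e := KaehlerDifferential.tensorKaehlerEquivOfFormallyEtale ℂ ℂ[X] L
  let d0 : Derivation ℂ ℂ[X] ℂ[X] := derivative'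
  let m : L ⊗[ℂ[X]] (Ω[ℂ[X]⁄ℂ]) →ₗ[L] L ⊗[ℂ[X]] ℂ[X] := 
    LinearMap.baseChange L d0.liftKaehlerDifferential
  let g : Ω[L⁄ℂ] →ₗ[L] L :=
    (TensorProduct.AlgebraTensorModule.rid ℂ[X] L L).toLinearMap ∘ₗ m ∘ₗ e.symm.toLinearMap
  refine ⟨g.compDer (KaehlerDifferential.D ℂ L), fun p => ?_⟩
  have h := KaehlerDifferential.tensorKaehlerEquivOfFormallyEtale_symm_D_algebraMap ℂ ℂ[X] L p
  change g (KaehlerDifferential.D ℂ L (algebraMap ℂ[X] L p)) = _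
  simp only [g, LinearMap.comp_apply, LinearEquiv.coe_coe, e]
  rw [h]
  simp [m, d0, Algebra.smul_def, Derivation.liftKaehlerDifferential_comp_D, derivative']

theorem ratfunc_const (δ0 : RatFunc ℂ) {M : Type*} [Field M] [Algebra ℂ M] [Algebra ℂ[X] M]
    [Algebra (RatFunc ℂ) M] [IsScalarTower ℂ[X] (RatFunc ℂ) M]
    (δ : Derivation ℂ M M)
    (hδ : ∀ p : ℂ[X], δ (algebraMap ℂ[X] M p) = algebraMap ℂ[X] M (derivative p))
    (h : δ (algebraMap (RatFunc ℂ) M δ0) = 0) : ∃ c : ℂ, δ0 = RatFunc.C c := by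
  have hinj : Function.Injective (algebraMap ℂ[X] M) := FunctionField.algebraMap_injective ℂ M
  set a := δ0.num with ha
  set b := δ0.denom with hb
  have hb0 : b ≠ 0 := δ0.denom_ne_zero
  have hb0' : algebraMap ℂ[X] M b ≠ 0 := by
    rw [Ne, map_eq_zero_iff _ hinj]; exact hb0
  have h1 : algebraMap (RatFunc ℂ) M δ0 * algebraMap ℂ[X] M b = algebraMap ℂ[X] M a := by
    conv_lhs => rw [← RatFunc.num_div_denom δ0, map_div₀, ← IsScalarTower.algebraMap_apply,
      ← IsScalarTower.algebraMap_apply]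
    exact div_mul_cancel₀ _ hb0'
  have h2 := congrArg δ h1
  rw [δ.leibniz, h, hδ, hδ] at h2
  simp only [smul_eq_mul, mul_zero, add_zero] at h2
  have h3 : a * derivative b = derivative a * b := by
    apply hinj
    rw [map_mul, map_mul, ← h2, ← h1]; ring
  have hco : IsCoprime a b := δ0.isCoprime_num_denom
  have hdvd : b ∣ derivative b := hco.symm.dvd_of_dvd_mul_left ⟨derivative a, by rw [h3]; ring⟩
  have hdb : derivative b = 0 := by
    by_contra hne
    have hdeg := Polynomial.degree_le_of_dvd hdvd hne
    exact absurd (Polynomial.degree_derivative_lt hb0) (not_lt.2 hdeg)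
  have hda : derivative a = 0 := by
    rw [hdb, mul_zero] at h3
    exact (mul_eq_zero.1 h3.symm).resolve_right hb0
  obtain ⟨ca, hca⟩ := Polynomial.natDegree_eq_zero.1 (derivative_eq_zero.1 hda)
  obtain ⟨cb, hcb⟩ := Polynomial.natDegree_eq_zero.1 (derivative_eq_zero.1 hdb)
  refine ⟨ca / cb, ?_⟩
  rw [← RatFunc.num_div_denom δ0, ← ha, ← hb, ← hca, ← hcb, RatFunc.algebraMap_C,
    RatFunc.algebraMap_C, map_div₀]

theorem ff_const [Algebra (RatFunc ℂ) L] [FiniteDimensional (RatFunc ℂ) L]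
    [IsScalarTower ℂ (RatFunc ℂ) L]
    [Algebra ℂ[X] L] [IsScalarTower ℂ[X] (RatFunc ℂ) L]
    (δ : Derivation ℂ L L)
    (hδ : ∀ p : ℂ[X], δ (algebraMap ℂ[X] L p) = algebraMap ℂ[X] L (derivative p))
    (f : L) (hf : δ f = 0) : IsConst L f := by
  have hint : IsIntegral (RatFunc ℂ) f := Algebra.IsIntegral.isIntegral f
  set p := minpoly (RatFunc ℂ) f with hp
  have hmon : p.Monic := minpoly.monic hint
  have hp0 : aeval f p = 0 := minpoly.aeval _ _
  -- the derivation maps the base field into itself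
  have hK : ∀ r : RatFunc ℂ, ∃ s : RatFunc ℂ, δ (algebraMap _ L r) = algebraMap _ L s := by
    intro r
    refine ⟨(algebraMap ℂ[X] _ r.denom)⁻¹ ^ 2 * (algebraMap ℂ[X] _ r.denom *
      algebraMap ℂ[X] _ (derivative r.num)
      - algebraMap ℂ[X] _ r.num * algebraMap ℂ[X] _ (derivative r.denom)), ?_⟩
    conv_lhs => rw [← RatFunc.num_div_denom r, map_div₀, ← IsScalarTower.algebraMap_apply,
      ← IsScalarTower.algebraMap_apply]
    rw [Derivation.leibniz_div, hδ, hδ]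
    simp only [map_mul, map_pow, map_sub, map_inv₀, ← IsScalarTower.algebraMap_apply, smul_eq_mul]
  choose σ hσ using hK
  have hinjK : Function.Injective (algebraMap (RatFunc ℂ) L) := (algebraMap (RatFunc ℂ) L).injective
  have hσ0 : σ 0 = 0 := by apply hinjK; rw [← hσ]; simp
  have hσ1 : σ 1 = 0 := by apply hinjK; rw [← hσ]; simp
  let q : (RatFunc ℂ)[X] := ∑ i ∈ Finset.range p.natDegree, monomial i (σ (p.coeff i))
  have hsum : aeval f q = 0 := by
    have h1 := congrArg δ hp0
    rw [aeval_eq_sum_range, map_zero, map_sum, Finset.sum_range_succ] at h1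
    have key : ∀ i, δ (p.coeff i • f ^ i) = algebraMap _ L (σ (p.coeff i)) * f ^ i := by
      intro i
      rw [Algebra.smul_def, δ.leibniz, δ.leibniz_pow, hf, hσ]
      simp [mul_comm]
    simp only [key] at h1
    rw [hmon.coeff_natDegree, hσ1, map_zero, zero_mul, add_zero] at h1
    simp only [q, map_sum, aeval_monomial]
    exact h1
  have hq0 : q = 0 := by
    by_contra hne
    have h1 := minpoly.degree_le_of_ne_zero (RatFunc ℂ) f hne hsum
    have h2 : q.degree < p.degree := by
      rw [degree_eq_natDegree hmon.ne_zero]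
      refine (degree_sum_le _ _).trans_lt ?_
      rw [Finset.sup_lt_iff (WithBot.bot_lt_coe _)]
      intro i hi
      exact (degree_monomial_le _ _).trans_lt (by exact_mod_cast Finset.mem_range.1 hi)
    exact absurd h1 (not_le.2 h2)
  have hcoeff : ∀ i, ∃ c : ℂ, p.coeff i = RatFunc.C c := by
    intro i
    apply ratfunc_const (M := L) _ δ hδ
    rw [hσ]
    rcases lt_trichotomy i p.natDegree with h | h | h
    · have := congrArg (fun r => r.coeff i) hq0
      simp only [q, finsetSum_coeff, coeff_monomial, coeff_zero, Finset.sum_ite_eq',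
        Finset.mem_range, h, if_true] at this
      rw [this, map_zero]
    · rw [h, hmon.coeff_natDegree, hσ1, map_zero]
    · rw [coeff_eq_zero_of_natDegree_lt h, hσ0, map_zero]
  choose c hc using hcoeff
  have halg : IsAlgebraic ℂ f := by
    refine ⟨∑ i ∈ Finset.range (p.natDegree + 1), monomial i (c i), ?_, ?_⟩
    · intro h0
      have := congrArg (fun r => r.coeff p.natDegree) h0
      simp only [finsetSum_coeff, coeff_monomial, coeff_zero, Finset.sum_ite_eq',
        Finset.mem_range, Nat.lt_succ_self, if_true] at this
      have h2 := hc p.natDegree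
      rw [hmon.coeff_natDegree, this, map_zero] at h2
      exact one_ne_zero h2
    · rw [← hp0, map_sum, aeval_eq_sum_range]
      refine Finset.sum_congr rfl fun i _ => ?_
      rw [aeval_monomial, hc, Algebra.smul_def, ← RatFunc.algebraMap_eq_C,
        ← IsScalarTower.algebraMap_apply]
  exact minpoly.mem_range_of_degree_eq_one ℂ f
    (IsAlgClosed.degree_eq_one_of_irreducible ℂ (minpoly.irreducible halg.isIntegral))

end Deriv
/-! ### Derivations are bounded with respect to valuations -/

section Bounded

open Polynomial

variable {L : Type*} [Field L] [Algebra ℂ L]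

/-- Elements integral over `ℂ[X]` have nonnegative valuation if `X` does. -/
theorem ff_integral_nonneg [Algebra ℂ[X] L] (μ : FFValuation L)
    (hpol : ∀ p : ℂ[X], 0 ≤ μ.v (algebraMap ℂ[X] L p))
    (r : L) (hr : IsIntegral ℂ[X] r) : 0 ≤ μ.v r := by
  by_contra hneg
  have hr0 : r ≠ 0 := by
    rintro rfl
    exact hneg (by simp [μ.v_zero])
  obtain ⟨k, hk⟩ := μ.exists_int hr0
  have hk0 : k < 0 := by
    rw [hk, not_le] at hneg
    exact_mod_cast hneg
  obtain ⟨P, hmon, hP⟩ := hr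
  rw [eval₂_eq_sum_range, Finset.sum_range_succ, hmon.coeff_natDegree, map_one, one_mul] at hP
  have h1 : r ^ P.natDegree = -∑ i ∈ Finset.range P.natDegree,
      algebraMap ℂ[X] L (P.coeff i) * r ^ i := by
    linear_combination hP
  have h2 : (((P.natDegree : ℤ) * k + 1 : ℤ) : WithTop ℤ) ≤ μ.v (r ^ P.natDegree) := by
    rw [h1, μ.v_neg]
    refine μ.le_sum _ _ fun i hi => ?_
    rw [μ.v_mul, μ.v_pow_int hk]
    have hi' : (i : ℤ) + 1 ≤ P.natDegree := by exact_mod_cast Finset.mem_range.1 hi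
    have : (P.natDegree : ℤ) * k + 1 ≤ 0 + i * k := by nlinarith
    calc (((P.natDegree : ℤ) * k + 1 : ℤ) : WithTop ℤ) ≤ ((0 + i * k : ℤ) : WithTop ℤ) := by
            exact_mod_cast this
      _ ≤ _ := by
        rw [WithTop.coe_add]
        exact add_le_add (hpol _) le_rfl
  rw [μ.v_pow_int hk] at h2
  have : (P.natDegree : ℤ) * k + 1 ≤ P.natDegree * k := by exact_mod_cast h2
  omega

/-- In terms of the ring of integers: every `f` with `μ f ≥ 0` is a quotient `a / b` of integral
elements with `μ b = 0`. -/
theorem ff_quot (R : Type*) [CommRing R] [IsDedekindDomain R] [Algebra R L] [IsFractionRing R L]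
    (μ : FFValuation L) (hR : ∀ r : R, 0 ≤ μ.v (algebraMap R L r)) (f : L) (hf : 0 ≤ μ.v f) :
    ∃ a b : R, μ.v (algebraMap R L b) = 0 ∧ f * algebraMap R L b = algebraMap R L a := by
  let P : Ideal R :=
    { carrier := {r | 0 < μ.v (algebraMap R L r)}
      zero_mem' := by
        change 0 < μ.v (algebraMap R L 0)
        rw [map_zero, μ.v_zero]; exact WithTop.coe_lt_top 0
      add_mem' := by
        intro a b ha hb
        change 0 < μ.v (algebraMap R L (a + b))
        rw [map_add]
        exact lt_of_lt_of_le (lt_min ha hb) (μ.v_add _ _)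
      smul_mem' := by
        intro c a ha
        change 0 < μ.v (algebraMap R L (c * a))
        rw [map_mul, μ.v_mul]
        exact lt_of_lt_of_le ha (le_add_of_nonneg_left (hR c)) }
  have hmem : ∀ r : R, r ∈ P ↔ 0 < μ.v (algebraMap R L r) := fun r => Iff.rfl
  have hnot : ∀ r : R, r ∉ P → μ.v (algebraMap R L r) = 0 := fun r hr =>
    le_antisymm (not_lt.1 hr) (hR r)
  have hprime : P.IsPrime := by
    refine ⟨?_, ?_⟩
    · rw [Ne, Ideal.eq_top_iff_one, hmem, map_one, μ.v_one]
      exact lt_irrefl _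
    · intro a b hab
      by_contra hcon
      push Not at hcon
      rw [hmem, map_mul, μ.v_mul, hnot a hcon.1, hnot b hcon.2, add_zero] at hab
      exact lt_irrefl _ hab
  by_cases hbot : P = ⊥
  · obtain ⟨a, b, hb, h⟩ := IsFractionRing.div_surjective (A := R) f
    have hb0 : b ≠ 0 := nonZeroDivisors.ne_zero hb
    refine ⟨a, b, hnot b ?_, ?_⟩
    · rw [hbot]; exact hb0
    · rw [← h]
      refine div_mul_cancel₀ _ ?_
      rw [Ne, map_eq_zero_iff _ (IsFractionRing.injective R L)]
      exact hb0
  · let w : IsDedekindDomain.HeightOneSpectrum R := ⟨P, hprime, hbot⟩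
    obtain ⟨n, d, h | h⟩ := w.exists_primeCompl_mul_eq_or_mul_eq f
    · exact ⟨n, d, hnot d d.2, h⟩
    · refine ⟨d, n, ?_, h⟩
      have h1 := congrArg μ.v h
      rw [μ.v_mul, hnot d d.2] at h1
      refine le_antisymm ?_ (hR n)
      rw [← h1]
      exact le_add_of_nonneg_left hf

theorem ff_bdd_aux [Algebra (RatFunc ℂ) L] [FiniteDimensional (RatFunc ℂ) L]
    [Algebra ℂ[X] L] [IsScalarTower ℂ[X] (RatFunc ℂ) L] [IsScalarTower ℂ ℂ[X] L]
    (μ : FFValuation L) (hX : 0 ≤ μ.v (algebraMap ℂ[X] L X)) (δ : Derivation ℂ L L) :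
    ∃ c : ℤ, ∀ f : L, 0 ≤ μ.v f → (c : WithTop ℤ) ≤ μ.v (δ f) := by
  have : CharZero (RatFunc ℂ) := algebraRat.charZero _
  have haev : ∀ p : ℂ[X], algebraMap ℂ[X] L p = aeval (algebraMap ℂ[X] L X) p := by
    intro p
    rw [aeval_algebraMap_apply, aeval_X_left_apply]
  have hpol : ∀ p : ℂ[X], 0 ≤ μ.v (algebraMap ℂ[X] L p) := by
    intro p
    rw [haev, aeval_eq_sum_range]
    refine μ.le_sum _ _ fun i _ => ?_
    rw [Algebra.smul_def, μ.v_mul, μ.v_pow]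
    exact add_nonneg (μ.v_constC _) (nsmul_nonneg hX _)
  let R := FunctionField.ringOfIntegers ℂ L
  have hR : ∀ r : R, 0 ≤ μ.v (algebraMap R L r) := fun r =>
    ff_integral_nonneg μ hpol _ r.2
  have hfin : Module.Finite ℂ[X] R := inferInstance
  obtain ⟨s, hs⟩ := hfin.fg_top
  have hlow : ∀ g : L, ∃ c : ℤ, (c : WithTop ℤ) ≤ μ.v g := by
    intro g
    by_cases hg : g = 0
    · exact ⟨0, by simp [hg, μ.v_zero]⟩
    · obtain ⟨k, hk⟩ := μ.exists_int hg
      exact ⟨k, hk.ge⟩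
  obtain ⟨c, hcX, hcs⟩ : ∃ c : ℤ, (c : WithTop ℤ) ≤ μ.v (δ (algebraMap ℂ[X] L X)) ∧
      ∀ r ∈ s, (c : WithTop ℤ) ≤ μ.v (δ (algebraMap R L r)) := by
    clear hs
    classical
    induction s using Finset.induction_on with
    | empty =>
      obtain ⟨c, hc⟩ := hlow (δ (algebraMap ℂ[X] L X))
      exact ⟨c, hc, by simp⟩
    | insert a s ha ih =>
      obtain ⟨c, hc, hcs⟩ := ih
      obtain ⟨d, hd⟩ := hlow (δ (algebraMap R L a))
      have h1 : ((min c d : ℤ) : WithTop ℤ) ≤ c := by exact_mod_cast min_le_left _ _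
      have h2 : ((min c d : ℤ) : WithTop ℤ) ≤ d := by exact_mod_cast min_le_right _ _
      refine ⟨min c d, h1.trans hc, fun r hr => ?_⟩
      rcases Finset.mem_insert.1 hr with rfl | hr
      · exact h2.trans hd
      · exact h1.trans (hcs r hr)
  have hmul : ∀ {g h : L}, 0 ≤ μ.v g → (c : WithTop ℤ) ≤ μ.v h → (c : WithTop ℤ) ≤ μ.v (g * h) := by
    intro g h hg hh
    rw [μ.v_mul]
    exact hh.trans (le_add_of_nonneg_left hg)
  have hRc : ∀ r : R, (c : WithTop ℤ) ≤ μ.v (δ (algebraMap R L r)) := by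
    intro r
    have hr : r ∈ Submodule.span ℂ[X] (s : Set R) := by rw [hs]; trivial
    induction hr using Submodule.span_induction with
    | mem x hx => exact hcs x hx
    | zero => rw [map_zero, map_zero, μ.v_zero]; exact le_top
    | add x y _ _ hx hy =>
      rw [map_add, map_add]
      exact μ.le_add hx hy
    | smul p x _ hx =>
      have : algebraMap R L (p • x) = algebraMap ℂ[X] L p * algebraMap R L x := by
        rw [Algebra.smul_def, map_mul, ← IsScalarTower.algebraMap_apply]
      rw [this, δ.leibniz, haev p, δ.map_aeval, ← haev, ← haev]
      exact μ.le_add (hmul (hpol _) hx) (hmul (hR x) (hmul (hpol _) hcX))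
  refine ⟨c, fun f hf => ?_⟩
  obtain ⟨a, b, hb, hab⟩ := ff_quot R μ hR f hf
  have h1 := congrArg δ hab
  rw [δ.leibniz] at h1
  simp only [smul_eq_mul] at h1
  have h2 : algebraMap R L b * δ f = δ (algebraMap R L a) - f * δ (algebraMap R L b) := by
    linear_combination h1
  have h3 := congrArg μ.v h2
  rw [μ.v_mul, hb, zero_add] at h3
  rw [h3]
  exact μ.le_sub (hRc a) (hmul hf (hRc b))

theorem ff_bdd_hom (φ : RatFunc ℂ →ₐ[ℂ] L) (hφ : φ.toRingHom.Finite)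
    (μ : FFValuation L) (hX : 0 ≤ μ.v (φ RatFunc.X)) (δ : Derivation ℂ L L) :
    ∃ c : ℤ, ∀ f : L, 0 ≤ μ.v f → (c : WithTop ℤ) ≤ μ.v (δ f) := by
  let _ : Algebra (RatFunc ℂ) L := φ.toRingHom.toAlgebra
  have : FiniteDimensional (RatFunc ℂ) L := hφ
  let _ : Algebra ℂ[X] L := (φ.toRingHom.comp (algebraMap ℂ[X] (RatFunc ℂ))).toAlgebra
  have : IsScalarTower ℂ[X] (RatFunc ℂ) L := IsScalarTower.of_algebraMap_eq fun _ => rfl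
  have : IsScalarTower ℂ ℂ[X] L := IsScalarTower.of_algebraMap_eq fun c => by
    change _ = φ (algebraMap ℂ[X] (RatFunc ℂ) (algebraMap ℂ ℂ[X] c))
    rw [← IsScalarTower.algebraMap_apply, φ.commutes]
  refine ff_bdd_aux μ ?_ δ
  change 0 ≤ μ.v (φ (algebraMap ℂ[X] (RatFunc ℂ) X))
  rwa [RatFunc.algebraMap_X]

/-- The substitution `X ↦ X⁻¹`. -/
theorem ratfunc_inv : ∃ σ : RatFunc ℂ →ₐ[ℂ] RatFunc ℂ, σ RatFunc.X = RatFunc.X⁻¹ ∧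
    Function.Surjective σ := by
  let ψ : ℂ[X] →ₐ[ℂ] RatFunc ℂ := aeval (RatFunc.X⁻¹ : RatFunc ℂ)
  have htr : Transcendental ℂ (RatFunc.X⁻¹ : RatFunc ℂ) := by
    intro h
    have h2 := h.inv
    rw [inv_inv] at h2
    exact RatFunc.transcendental_X h2
  have hψ : Function.Injective ψ := transcendental_iff_injective.1 htr
  let σ : RatFunc ℂ →ₐ[ℂ] RatFunc ℂ := RatFunc.liftAlgHom ψ
    (nonZeroDivisors_le_comap_nonZeroDivisors_of_injective _ hψ)
  have hσp : ∀ p : ℂ[X], σ (algebraMap ℂ[X] _ p) = ψ p := by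
    intro p
    have := RatFunc.liftAlgHom_apply_div ψ
      (nonZeroDivisors_le_comap_nonZeroDivisors_of_injective _ hψ) p 1
    simpa using this
  have hσX : σ RatFunc.X = RatFunc.X⁻¹ := by
    rw [← RatFunc.algebraMap_X, hσp]; simp [ψ]
  have hσσp : ∀ p : ℂ[X], σ (σ (algebraMap ℂ[X] _ p)) = algebraMap ℂ[X] _ p := by
    intro p
    rw [hσp]
    simp only [ψ]
    rw [← aeval_algHom_apply, map_inv₀, hσX, inv_inv, ← RatFunc.algebraMap_X,
      aeval_algebraMap_apply, aeval_X_left_apply]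
  refine ⟨σ, hσX, fun f => ⟨σ f, ?_⟩⟩
  rw [← RatFunc.num_div_denom f]
  simp only [map_div₀, hσσp]

theorem ff_bdd [Algebra (RatFunc ℂ) L] [FiniteDimensional (RatFunc ℂ) L]
    [IsScalarTower ℂ (RatFunc ℂ) L]
    (μ : FFValuation L) (δ : Derivation ℂ L L) :
    ∃ c : ℤ, ∀ f : L, (c : WithTop ℤ) + μ.v f ≤ μ.v (δ f) := by
  have h0 : ∃ c : ℤ, ∀ f : L, 0 ≤ μ.v f → (c : WithTop ℤ) ≤ μ.v (δ f) := by
    let φ : RatFunc ℂ →ₐ[ℂ] L := IsScalarTower.toAlgHom ℂ (RatFunc ℂ) L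
    have hφ : φ.toRingHom.Finite := by
      change (algebraMap (RatFunc ℂ) L).Finite
      rw [RingHom.finite_algebraMap]
      infer_instance
    by_cases hX : 0 ≤ μ.v (φ RatFunc.X)
    · exact ff_bdd_hom φ hφ μ hX δ
    · obtain ⟨σ, hσX, hσ⟩ := ratfunc_inv
      refine ff_bdd_hom (φ.comp σ) (hφ.comp (RingHom.Finite.of_surjective _ hσ)) μ ?_ δ
      obtain ⟨k, hk⟩ := μ.exists_int (f := φ RatFunc.X) (by
        rw [Ne, map_eq_zero]; exact RatFunc.X_ne_zero)
      rw [AlgHom.comp_apply, hσX, map_inv₀, μ.v_inv hk]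
      rw [hk, not_le] at hX
      have : k < 0 := by exact_mod_cast hX
      exact_mod_cast (by omega : 0 ≤ -k)
  obtain ⟨c, hc⟩ := h0
  obtain ⟨π, hπ⟩ := μ.v_exists_one
  have hπ' : μ.v π = ((1 : ℤ) : WithTop ℤ) := hπ
  have hπ0 : π ≠ 0 := by
    rintro rfl
    rw [μ.v_zero] at hπ'
    exact absurd hπ' (by simp)
  have hcπ := hc π (by rw [hπ]; exact zero_le_one)
  refine ⟨c - 1, fun f => ?_⟩
  by_cases hf : f = 0
  · simp [hf, μ.v_zero]
  obtain ⟨k, hk⟩ := μ.exists_int hf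
  set g := π ^ (-k) * f with hg
  have hvg : μ.v g = 0 := by
    rw [hg, μ.v_mul, μ.v_zpow_int hπ', hk]
    norm_cast
    ring
  have hfg : f = π ^ k * g := by
    rw [hg, ← mul_assoc, ← zpow_add₀ hπ0]; simp
  have hcg := hc g hvg.ge
  have e1 : ((c - 1 : ℤ) : WithTop ℤ) + μ.v f = ((c - 1 + k : ℤ) : WithTop ℤ) := by
    rw [hk, WithTop.coe_add]
  rw [e1, hfg, δ.leibniz, δ.leibniz_zpow]
  apply μ.le_add
  · rw [smul_eq_mul, μ.v_mul, μ.v_zpow_int hπ']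
    calc ((c - 1 + k : ℤ) : WithTop ℤ) ≤ ((k * 1 + c : ℤ) : WithTop ℤ) := by
          exact_mod_cast (by omega : c - 1 + k ≤ k * 1 + c)
      _ ≤ _ := by rw [WithTop.coe_add]; exact add_le_add le_rfl hcg
  · rw [smul_eq_mul, μ.v_mul, hvg, zero_add, zsmul_eq_mul, smul_eq_mul, μ.v_mul, μ.v_mul,
      μ.v_zpow_int hπ']
    calc ((c - 1 + k : ℤ) : WithTop ℤ) = ((0 : ℤ) : WithTop ℤ) + (((k - 1) * 1 + c : ℤ) : WithTop ℤ) := by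
          rw [← WithTop.coe_add]; congr 1; ring
      _ ≤ _ := by
        rw [WithTop.coe_add]
        exact add_le_add (μ.v_intCast k) (add_le_add le_rfl hcπ)

end Bounded
/-! ### Elimination -/

section Elim

open Polynomial

variable {L : Type*} [Field L] [Algebra ℂ L]

/-- Apply a derivation to the coefficients of a polynomial. -/
noncomputable def coeffD (δ : Derivation ℂ L L) (a : L[X]) : L[X] :=
  ∑ i ∈ a.support, monomial i (δ (a.coeff i))

theorem coeffD_natDegree_le (δ : Derivation ℂ L L) (a : L[X]) :
    (coeffD δ a).natDegree ≤ a.natDegree := by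
  refine natDegree_sum_le_of_forall_le _ _ fun i hi => ?_
  exact (natDegree_monomial_le _).trans (le_natDegree_of_mem_supp i hi)

theorem coeffD_eval (δ : Derivation ℂ L L) (a : L[X]) (n : ℕ) :
    (coeffD δ a).eval (n : L) = δ (a.eval (n : L)) := by
  rw [coeffD, eval_finsetSum, eval_eq_sum, Polynomial.sum_def, map_sum]
  refine Finset.sum_congr rfl fun i _ => ?_
  have h : δ ((n : L) ^ i) = 0 := by
    rw [← Nat.cast_pow, δ.map_natCast]
  rw [eval_monomial, δ.leibniz, h]
  simp [mul_comm]

/-- The polynomial `b` with `δ (a(n) α ^ n) = b(n) α ^ n`. -/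
noncomputable def twistD (δ : Derivation ℂ L L) (α : L) (a : L[X]) : L[X] :=
  coeffD δ a + X * C (δ α / α) * a

theorem twistD_eval (δ : Derivation ℂ L L) (α : L) (hα : α ≠ 0) (a : L[X]) (n : ℕ) :
    δ (a.eval (n : L) * α ^ n) = (twistD δ α a).eval (n : L) * α ^ n := by
  rw [δ.leibniz, δ.leibniz_pow, twistD, eval_add, coeffD_eval, eval_mul, eval_mul, eval_X, eval_C]
  simp only [smul_eq_mul, nsmul_eq_mul]
  rcases n with _ | n
  · simp
  · rw [Nat.add_sub_cancel, pow_succ]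
    field_simp
    ring

theorem elim_ne_zero (δ : Derivation ℂ L L) (α β : L) (a b : L[X]) (ha : a ≠ 0) (hb : b ≠ 0)
    (hne : δ α / α ≠ δ β / β) :
    b * twistD δ α a - twistD δ β b * a ≠ 0 := by
  intro h
  have hc : δ α / α - δ β / β ≠ 0 := sub_ne_zero.2 hne
  have h1 : X * (C (δ α / α - δ β / β) * (b * a)) = coeffD δ b * a - b * coeffD δ a := by
    rw [twistD, twistD] at h
    rw [C_sub]
    linear_combination h
  have hba : b * a ≠ 0 := mul_ne_zero hb ha
  have h2 : (X * (C (δ α / α - δ β / β) * (b * a))).natDegree = b.natDegree + a.natDegree + 1 := by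
    rw [natDegree_X_mul (mul_ne_zero (C_ne_zero.2 hc) hba), natDegree_C_mul hc,
      natDegree_mul hb ha]
  have h3 : (coeffD δ b * a - b * coeffD δ a).natDegree ≤ b.natDegree + a.natDegree := by
    refine (natDegree_sub_le _ _).trans (max_le ?_ ?_)
    · exact natDegree_mul_le.trans (Nat.add_le_add_right (coeffD_natDegree_le δ b) _)
    · exact natDegree_mul_le.trans (Nat.add_le_add_left (coeffD_natDegree_le δ a) _)
  rw [← h1, h2] at h3
  omega

theorem withTop_move {K C : ℤ} {y z : WithTop ℤ} (h : (K : WithTop ℤ) + y ≤ (C : WithTop ℤ) + z) :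
    y ≤ ((C - K : ℤ) : WithTop ℤ) + z := by
  cases z with
  | top => simp
  | coe z =>
    cases y with
    | top => 
      rw [← WithTop.coe_add, WithTop.add_top] at h
      exact absurd h (by simp)
    | coe y =>
      have h' : K + y ≤ C + z := by exact_mod_cast h
      exact_mod_cast (by omega : y ≤ C - K + z)

theorem elim_main [CharZero L] {ι : Type*} [DecidableEq ι] (μ : FFValuation L)
    (δ : Derivation ℂ L L)
    (hδ : ∃ c : ℤ, ∀ f : L, (c : WithTop ℤ) + μ.v f ≤ μ.v (δ f))
    (α : ι → L) (hα : ∀ i, α i ≠ 0)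
    (hne : ∀ i j, i ≠ j → δ (α i) / α i ≠ δ (α j) / α j) (k : ι) (s : Finset ι) (hk : k ∉ s) :
    ∀ a : ι → L[X], (∀ i, a i ≠ 0) → ∃ C : ℤ, ∃ N : ℕ, ∀ n : ℕ, N ≤ n →
      μ.v (∑ i ∈ insert k s, (a i).eval (n : L) * α i ^ n) ≤ (C : WithTop ℤ) + μ.v (α k ^ n) := by
  induction s using Finset.induction_on with
  | empty =>
    intro a ha
    obtain ⟨C, N, h⟩ := μ.poly_upper (a k) (ha k)
    refine ⟨C, N, fun n hn => ?_⟩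
    rw [Finset.sum_insert hk, Finset.sum_empty, add_zero, μ.v_mul]
    exact add_le_add (h n hn) le_rfl
  | insert j s hj ih =>
    intro a ha
    have hkj : k ≠ j := fun h => hk (by simp [h])
    have hks : k ∉ s := fun h => hk (by simp [h])
    have hjks : j ∉ insert k s := by
      simp only [Finset.mem_insert, not_or]
      exact ⟨hkj.symm, hj⟩
    let a' : ι → L[X] := fun i =>
      if i = j then 1 else a j * twistD δ (α i) (a i) - twistD δ (α j) (a j) * a i
    have ha' : ∀ i, a' i ≠ 0 := by
      intro i
      by_cases h : i = j
      · simp [a', h]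
      · simp only [a', h, if_false]
        exact elim_ne_zero δ _ _ _ _ (ha i) (ha j) (hne i j h)
    obtain ⟨C, N, hC⟩ := ih hks a' ha'
    obtain ⟨c, hc⟩ := hδ
    obtain ⟨c1, h1⟩ := μ.poly_lower (a j)
    obtain ⟨c2, h2⟩ := μ.poly_lower (twistD δ (α j) (a j))
    set K := min (c1 + c) c2
    refine ⟨C - K, N, fun n hn => withTop_move ?_⟩
    refine le_trans ?_ (hC n hn)
    set S := ∑ i ∈ insert k (insert j s), (a i).eval (n : L) * α i ^ n with hS
    have hT : ∑ i ∈ insert k s, (a' i).eval (n : L) * α i ^ n =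
        (a j).eval (n : L) * δ S - (twistD δ (α j) (a j)).eval (n : L) * S := by
      rw [hS, Finset.insert_comm, Finset.sum_insert hjks, map_add, map_sum,
        twistD_eval δ _ (hα j)]
      simp only [twistD_eval δ _ (hα _)]
      have : ∀ i ∈ insert k s, (a' i).eval (n : L) * α i ^ n =
          (a j).eval (n : L) * ((twistD δ (α i) (a i)).eval (n : L) * α i ^ n)
          - (twistD δ (α j) (a j)).eval (n : L) * ((a i).eval (n : L) * α i ^ n) := by
        intro i hi
        have hij : i ≠ j := fun h => hjks (h ▸ hi)
        simp only [a', hij, if_false, eval_sub, eval_mul]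
        ring
      rw [Finset.sum_congr rfl this, Finset.sum_sub_distrib, ← Finset.mul_sum, ← Finset.mul_sum]
      ring
    rw [hT]
    apply μ.le_sub
    · rw [μ.v_mul]
      calc (K : WithTop ℤ) + μ.v S ≤ ((c1 + c : ℤ) : WithTop ℤ) + μ.v S := by
            refine add_le_add ?_ le_rfl
            exact_mod_cast min_le_left _ _
        _ = (c1 : WithTop ℤ) + ((c : WithTop ℤ) + μ.v S) := by rw [WithTop.coe_add, add_assoc]
        _ ≤ _ := add_le_add (h1 n) (hc S)
    · rw [μ.v_mul]
      refine add_le_add (le_trans ?_ (h2 n)) le_rfl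
      exact_mod_cast min_le_right _ _

end Elim

theorem stmt_8
    -- the function field F ...
    (F : Type*) [Field F] [Algebra (RatFunc ℂ) F] (hFF : FunctionField ℂ F)
    -- ... and the splitting field L of the characteristic polynomial,
    -- a function field over ℂ containing F
    (L : Type*) [Field L] [Algebra ℂ L] [Algebra (RatFunc ℂ) L]
    [IsScalarTower ℂ (RatFunc ℂ) L] (hLFF : FunctionField ℂ L)
    [Algebra F L]
    (t : ℕ)
    -- the characteristic roots (in L) and the polynomial coefficients
    (α : Fin (t + 1) → L) (A : Fin (t + 1) → Polynomial L)
    (hα0 : ∀ j, α j ≠ 0) (hA0 : ∀ j, A j ≠ 0)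
    (hαinj : Function.Injective α)
    -- non-degeneracy
    (hGnd : ∀ i j, i ≠ j → ¬ IsConst L (α i / α j))
    -- L = F(α₁, …, α_t)
    (hgen : IntermediateField.adjoin F (Set.range α) = ⊤)
    -- the sequence takes values in F
    (G : ℕ → F)
    (hG : ∀ n : ℕ, algebraMap F L (G n) = ∑ j, (A j).eval (n : L) * α j ^ n)
    -- a valuation μ on L
    (μ : FFValuation L) :
    ∃ Cplus Cminus : ℤ, ∃ N : ℕ, ∀ n : ℕ, N ≤ n →
      (Cminus : WithTop ℤ) + n • (Finset.univ.inf' Finset.univ_nonempty fun j => μ.v (α j))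
          ≤ μ.v (algebraMap F L (G n)) ∧
      μ.v (algebraMap F L (G n))
          ≤ (Cplus : WithTop ℤ) + n • (Finset.univ.inf' Finset.univ_nonempty fun j => μ.v (α j)) := by
  classical
  have hchar : CharZero L := charZero_of_injective_algebraMap (algebraMap ℂ L).injective
  let _ : Algebra (Polynomial ℂ) L :=
    ((algebraMap (RatFunc ℂ) L).comp (algebraMap (Polynomial ℂ) (RatFunc ℂ))).toAlgebra
  have htow : IsScalarTower (Polynomial ℂ) (RatFunc ℂ) L :=
    IsScalarTower.of_algebraMap_eq fun _ => rfl
  have htow' : IsScalarTower ℂ (Polynomial ℂ) L := IsScalarTower.of_algebraMap_eq fun c => by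
    change _ = algebraMap (RatFunc ℂ) L
      (algebraMap (Polynomial ℂ) (RatFunc ℂ) (algebraMap ℂ (Polynomial ℂ) c))
    rw [← IsScalarTower.algebraMap_apply ℂ (Polynomial ℂ) (RatFunc ℂ),
      ← IsScalarTower.algebraMap_apply ℂ (RatFunc ℂ) L]
  have hfd : FiniteDimensional (RatFunc ℂ) L := hLFF
  obtain ⟨δ, hδ⟩ := ff_exists_deriv (L := L)
  have hbdd := ff_bdd μ δ
  have hne : ∀ i j, i ≠ j → δ (α i) / α i ≠ δ (α j) / α j := by
    intro i j hij h
    apply hGnd i j hij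
    apply ff_const δ hδ
    rw [div_eq_div_iff (hα0 i) (hα0 j)] at h
    rw [δ.leibniz_div]
    simp only [smul_eq_mul]
    rw [show α j * δ (α i) - α i * δ (α j) = 0 by linear_combination h, mul_zero]
  obtain ⟨k, -, hk⟩ := Finset.exists_mem_eq_inf' (Finset.univ_nonempty (α := Fin (t + 1)))
    (fun j => μ.v (α j))
  obtain ⟨Cp, N, hup⟩ := elim_main μ δ hbdd α hα0 hne k (Finset.univ.erase k) (by simp) A hA0
  rw [Finset.insert_erase (Finset.mem_univ k)] at hup
  choose c hc using fun j => μ.poly_lower (A j)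
  refine ⟨Cp, Finset.univ.inf' Finset.univ_nonempty c, N, fun n hn => ⟨?_, ?_⟩⟩
  · rw [hG]
    refine μ.le_sum _ _ fun j _ => ?_
    rw [μ.v_mul, μ.v_pow]
    refine add_le_add (le_trans ?_ (hc j n)) ?_
    · exact_mod_cast Finset.inf'_le c (Finset.mem_univ j)
    · exact nsmul_le_nsmul_right (Finset.inf'_le (fun j => μ.v (α j)) (Finset.mem_univ j)) n
  · rw [hG, hk, ← μ.v_pow]
    exact hup n hn
end

section
/- Let $F$ be a function field in one variable over $\mathbb{C}$ of genus $\mathfrak{g}$, let $\gamma, \delta \in F \setminus \mathbb{C}$ be multiplicatively independent, and let $n, m$ be positive integers. Assume that $\mathcal{H}(\gamma^n / \delta^m) \le L$. Then there exists an effectively computable constant $L'$, depending only on $\gamma$, $\delta$, $\mathfrak{g}$ and $L$ (and not on $n, m$), such that $\max\{n, m\} \le L'$. -/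
/-- The system of all valuations (places) of a function field `F/ℂ`,
together with the genus of `F`. -/
structure PlaceSystem (F : Type*) [Field F] [Algebra ℂ F] where
  /-- index type for the places of `F/ℂ` -/
  ι : Type
  /-- the valuation attached to a place (junk value `0` at `f = 0`) -/
  v : ι → F → ℤ
  /-- the genus `𝔤` of `F` -/
  genus : ℕ
  v_zero : ∀ ν, v ν 0 = 0
  v_mul : ∀ ν, ∀ f g : F, f ≠ 0 → g ≠ 0 → v ν (f * g) = v ν f + v ν g
  v_add : ∀ ν, ∀ f g : F, f ≠ 0 → g ≠ 0 → f + g ≠ 0 →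
    min (v ν f) (v ν g) ≤ v ν (f + g)
  v_const : ∀ ν, ∀ c : ℂ, v ν (algebraMap ℂ F c) = 0
  v_exists_one : ∀ ν, ∃ f : F, f ≠ 0 ∧ v ν f = 1
  finite_support : ∀ f : F, f ≠ 0 → {ν | v ν f ≠ 0}.Finite
  sum_formula : ∀ f : F, f ≠ 0 → ∑ᶠ ν, v ν f = 0
  const_of_forall_zero : ∀ f : F, f ≠ 0 → (∀ ν, v ν f = 0) → IsConst F f

/-- The height `𝓗(f) = ∑_ν max {0, ν(f)}` of `f ∈ F*`. -/
noncomputable def PlaceSystem.height {F : Type*} [Field F] [Algebra ℂ F]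
    (P : PlaceSystem F) (f : F) : ℤ :=
  ∑ᶠ ν, max 0 (P.v ν f)
namespace PlaceSystem

variable {F : Type*} [Field F] [Algebra ℂ F] (P : PlaceSystem F)

theorem v_one (ν : P.ι) : P.v ν 1 = 0 := by
  have := P.v_const ν 1
  rwa [map_one] at this

theorem v_inv (ν : P.ι) {f : F} (hf : f ≠ 0) : P.v ν f⁻¹ = - P.v ν f := by
  have := P.v_mul ν f f⁻¹ hf (inv_ne_zero hf)
  rw [mul_inv_cancel₀ hf, P.v_one] at this
  linarith

theorem v_pow (ν : P.ι) {f : F} (hf : f ≠ 0) (n : ℕ) : P.v ν (f ^ n) = n * P.v ν f := by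
  induction n with
  | zero => simp [P.v_one]
  | succ k ih =>
    rw [pow_succ, P.v_mul ν _ _ (pow_ne_zero k hf) hf, ih]
    push_cast
    ring

theorem v_zpow (ν : P.ι) {f : F} (hf : f ≠ 0) (n : ℤ) : P.v ν (f ^ n) = n * P.v ν f := by
  obtain ⟨k, rfl | rfl⟩ := n.eq_nat_or_neg
  · rw [zpow_natCast, P.v_pow ν hf]
  · rw [zpow_neg, zpow_natCast, P.v_inv ν (pow_ne_zero k hf), P.v_pow ν hf]
    ring

theorem abs_v_le_height (ν : P.ι) {f : F} (hf : f ≠ 0) : |P.v ν f| ≤ P.height f := by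
  classical
  have hfin := P.finite_support f hf
  have h0 := P.sum_formula f hf
  have e1 : ∑ᶠ μ, P.v μ f = ∑ μ ∈ hfin.toFinset, P.v μ f := by
    apply finsum_eq_sum_of_support_subset
    intro μ hμ
    simpa using hμ
  have e2 : P.height f = ∑ μ ∈ hfin.toFinset, max 0 (P.v μ f) := by
    apply finsum_eq_sum_of_support_subset
    intro μ hμ
    simp only [Set.Finite.coe_toFinset, Set.mem_ofPred_eq]
    intro h
    apply hμ
    simp [h]
  have e3 : ∑ μ ∈ hfin.toFinset, max 0 (P.v μ f)
      = ∑ μ ∈ hfin.toFinset, max 0 (-P.v μ f) := by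
    rw [← sub_eq_zero, ← Finset.sum_sub_distrib]
    refine Eq.trans ?_ (e1.symm.trans h0)
    apply Finset.sum_congr rfl
    intro μ _
    omega
  by_cases hν : P.v ν f = 0
  · rw [hν, e2, abs_zero]
    exact Finset.sum_nonneg fun μ _ => le_max_left _ _
  · have hmem : ν ∈ hfin.toFinset := by simpa using hν
    have b1 := Finset.single_le_sum (f := fun μ => max 0 (P.v μ f))
      (fun μ _ => le_max_left _ _) hmem
    have b2 := Finset.single_le_sum (f := fun μ => max 0 (-P.v μ f))
      (fun μ _ => le_max_left _ _) hmem
    rw [← e2] at b1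
    rw [← e3, ← e2] at b2
    exact abs_le'.2 ⟨(le_max_right _ _).trans b1, (le_max_right _ _).trans b2⟩

end PlaceSystem

theorem bound_aux {k : ℕ} {D x y p q L : ℤ} (hD : D ≠ 0) (hx : |x| ≤ L) (hy : |y| ≤ L)
    (h : (k : ℤ) * D = x * p - y * q) : (k : ℤ) ≤ L * (|p| + |q|) := by
  have h1 : (1 : ℤ) ≤ |D| := Int.one_le_abs hD
  have h2 : (k : ℤ) ≤ |(k : ℤ) * D| := by
    rw [abs_mul, Nat.abs_cast]
    nlinarith [Int.natCast_nonneg k]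
  have h3 : |x * p - y * q| ≤ |x| * |p| + |y| * |q| := by
    rw [← abs_mul, ← abs_mul]
    exact abs_sub _ _
  rw [h] at h2
  nlinarith [mul_le_mul_of_nonneg_right hx (abs_nonneg p),
    mul_le_mul_of_nonneg_right hy (abs_nonneg q)]

theorem stmt_9
    (F : Type*) [Field F] [Algebra ℂ F] [Algebra (RatFunc ℂ) F]
    [IsScalarTower ℂ (RatFunc ℂ) F] (hFF : FunctionField ℂ F)
    (P : PlaceSystem F)
    (γ δ : F) (hγ : ¬ IsConst F γ) (hδ : ¬ IsConst F δ)
    (hindep : MultIndep F γ δ)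
    (L : ℤ) :
    ∃ L' : ℕ, ∀ n m : ℕ, 0 < n → 0 < m →
      P.height (γ ^ n / δ ^ m) ≤ L → max n m ≤ L' := by
  have hγ0 : γ ≠ 0 := by
    rintro rfl
    exact hγ ⟨0, map_zero _⟩
  have hδ0 : δ ≠ 0 := by
    rintro rfl
    exact hδ ⟨0, map_zero _⟩
  obtain ⟨ν, hν⟩ : ∃ ν, P.v ν γ ≠ 0 := by
    by_contra! h
    exact hγ (P.const_of_forall_zero γ hγ0 h)
  obtain ⟨μ, hμ⟩ : ∃ μ, P.v ν γ * P.v μ δ - P.v μ γ * P.v ν δ ≠ 0 := by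
    by_contra! h
    have hc := P.const_of_forall_zero (γ ^ (P.v ν δ) * δ ^ (-P.v ν γ))
      (mul_ne_zero (zpow_ne_zero _ hγ0) (zpow_ne_zero _ hδ0)) (fun μ => by
        rw [P.v_mul μ _ _ (zpow_ne_zero _ hγ0) (zpow_ne_zero _ hδ0), P.v_zpow μ hγ0,
          P.v_zpow μ hδ0]
        linarith [h μ])
    have := (hindep _ _ hc).2
    omega
  refine ⟨max (L * (|P.v μ δ| + |P.v ν δ|)).toNat (L * (|P.v μ γ| + |P.v ν γ|)).toNat, ?_⟩
  intro n m _ _ hL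
  have hval : ∀ κ, |(n : ℤ) * P.v κ γ - m * P.v κ δ| ≤ L := by
    intro κ
    have hne : γ ^ n / δ ^ m ≠ 0 := div_ne_zero (pow_ne_zero _ hγ0) (pow_ne_zero _ hδ0)
    have h1 := (P.abs_v_le_height κ hne).trans hL
    rwa [div_eq_mul_inv, P.v_mul κ _ _ (pow_ne_zero _ hγ0) (inv_ne_zero (pow_ne_zero _ hδ0)),
      P.v_inv κ (pow_ne_zero _ hδ0), P.v_pow κ hγ0, P.v_pow κ hδ0, ← sub_eq_add_neg] at h1
  have hn : (n : ℤ) ≤ L * (|P.v μ δ| + |P.v ν δ|) :=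
    bound_aux hμ (hval ν) (hval μ) (by ring)
  have hm : (m : ℤ) ≤ L * (|P.v μ γ| + |P.v ν γ|) :=
    bound_aux hμ (hval ν) (hval μ) (by ring)
  exact max_le_max (by omega) (by omega)
end
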